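/- Let Φ be a Young function such that Φ and its conjugate Φ̃ are of class Δ₂ ∩ Δ', assume ℳ is countably generated modulo μ-null sets, let {T(x)}_{x∈ℝ^N} be an N-dimensional dynamical system on Ω, and let f satisfy (H₁)–(H₄). Let (ε_k) ⊆ (0,1] with ε_k → 0 and let (u_k) be measurable functions on Q×Ω admitting weak x-gradients Du_k : Q×Ω → ℝ^N, i.e. ∫_{Q×Ω} u_k(x,ω) (∂φ/∂x_i)(x) ψ(ω) dx dμ = −∫_{Q×Ω} (Du_k)_i(x,ω) φ(x) ψ(ω) dx dμ for all φ ∈ C_c^∞(Q), all bounded measurable ψ : Ω → ℝ, and 1 ≤ i ≤ N. Suppose sup_k ‖|Du_k|‖_{Φ,Q×Ω} < ∞ and the components of Du_k weakly stochastically 2-scale converge to the components of a measurable V : Q×Ω×ℝ^N → ℝ^N, ℤ^N-periodic in the last variable, with ‖|V|‖_{Φ,Q×Ω×Y} < ∞. Then ∫_{Q×Ω×Y} f(x,ω,y,V(x,ω,y)) dx dμ(ω) dy ≤ liminf_{k→∞} ∫_{Q×Ω} f(x, T(x/ε_k)ω, x/ε_k², Du_k(x,ω)) dx dμ(ω). 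-/

import Mathlib

open MeasureTheory Filter Topology ENNReal

noncomputable section

/-- Euclidean norm on `Fin N → ℝ`. -/
def enorm2 {N : ℕ} (v : Fin N → ℝ) : ℝ := Real.sqrt (∑ i, v i ^ 2)

/-- `Φ : [0,∞) → [0,∞)` is a Young function: continuous, convex, positive on `(0,∞)`,
with `Φ(t)/t → 0` as `t → 0⁺` and `Φ(t)/t → ∞` as `t → ∞` (so `Φ(0) = 0`). -/
def IsYoung (Φ : ℝ → ℝ) : Prop :=
  ContinuousOn Φ (Set.Ici 0) ∧ ConvexOn ℝ (Set.Ici 0) Φ ∧ Φ 0 = 0 ∧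
    (∀ t : ℝ, 0 < t → 0 < Φ t) ∧ (∀ t : ℝ, 0 ≤ t → 0 ≤ Φ t) ∧
    Tendsto (fun t => Φ t / t) (nhdsWithin 0 (Set.Ioi 0)) (nhds 0) ∧
    Tendsto (fun t => Φ t / t) atTop atTop

/-- The `Δ₂`-condition (at infinity). -/
def Delta2 (Φ : ℝ → ℝ) : Prop :=
  ∃ α : ℝ, 0 < α ∧ ∃ t₀ : ℝ, 0 ≤ t₀ ∧ ∀ t : ℝ, t₀ ≤ t → Φ (2 * t) ≤ α * Φ t

/-- The `Δ'`-condition (at infinity). -/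
def DeltaPrime (Φ : ℝ → ℝ) : Prop :=
  ∃ k : ℝ, 0 < k ∧ ∃ t₀ s₀ : ℝ, 0 ≤ t₀ ∧ 0 ≤ s₀ ∧
    ∀ t s : ℝ, t₀ ≤ t → s₀ ≤ s → Φ (t * s) ≤ k * Φ t * Φ s

/-- The conjugate Young function `Φ̃(t) = sup_{s ≥ 0} (st − Φ(s))`. -/
def conjY (Φ : ℝ → ℝ) (t : ℝ) : ℝ := sSup ((fun s => s * t - Φ s) '' Set.Ici 0)

/-- The Luxemburg norm `‖u‖_{Φ,X} = inf {δ > 0 : ∫_X Φ(|u|/δ) dν ≤ 1}` (`+∞` if no such `δ`). -/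
def luxNorm {X : Type*} [MeasurableSpace X] (Φ : ℝ → ℝ) (ν : Measure X) (u : X → ℝ) : ℝ≥0∞ :=
  sInf {d : ℝ≥0∞ | ∃ δ : ℝ, 0 < δ ∧ d = ENNReal.ofReal δ ∧
    (∫⁻ x, ENNReal.ofReal (Φ (|u x| / δ)) ∂ν) ≤ 1}

/-- An `N`-dimensional dynamical system on `Ω` preserving `μ`. -/
def IsDynSys {N : ℕ} {Ω : Type*} [MeasurableSpace Ω] (μ : Measure Ω)
    (T : (Fin N → ℝ) → Ω → Ω) : Prop :=
  T 0 = id ∧ (∀ x y : Fin N → ℝ, T (x + y) = T x ∘ T y) ∧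
    (∀ x : Fin N → ℝ, MeasurePreserving (T x) μ μ) ∧
    Measurable fun p : (Fin N → ℝ) × Ω => T p.1 p.2

/-- `ℤ^N`-periodicity. -/
def ZPeriodic {N : ℕ} (g : (Fin N → ℝ) → ℝ) : Prop :=
  ∀ (y : Fin N → ℝ) (k : Fin N → ℤ), g (y + fun i => (k i : ℝ)) = g y

/-- The unit cube `Y = [0,1]^N`. -/
def Ycube (N : ℕ) : Set (Fin N → ℝ) := Set.Icc 0 1

/-- `ℳ` is countably generated modulo `μ`-null sets. -/
def CountGenModNull {Ω : Type*} [MeasurableSpace Ω] (μ : Measure Ω) : Prop :=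
  ∃ S : ℕ → Set Ω, (∀ n, MeasurableSet (S n)) ∧
    ∀ A : Set Ω, MeasurableSet A →
      ∃ B : Set Ω, MeasurableSet[MeasurableSpace.generateFrom (Set.range S)] B ∧
        μ (symmDiff A B) = 0

/-- Weak stochastic two-scale convergence of `(u k)` to `u₀` along the sequence `(ε k)`. -/
def WeakStoch2Scale {N : ℕ} {Ω : Type*} [MeasurableSpace Ω] (μ : Measure Ω)
    (T : (Fin N → ℝ) → Ω → Ω) (Q : Set (Fin N → ℝ)) (ε : ℕ → ℝ)
    (u : ℕ → (Fin N → ℝ) → Ω → ℝ) (u₀ : (Fin N → ℝ) → Ω → (Fin N → ℝ) → ℝ) : Prop :=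
  ∀ φ : (Fin N → ℝ) → ℝ, ContDiff ℝ (⊤ : ℕ∞) φ → HasCompactSupport φ → tsupport φ ⊆ Q →
    ∀ ψ : Ω → ℝ, Measurable ψ → (∃ C : ℝ, ∀ ω, |ψ ω| ≤ C) →
      ∀ g : (Fin N → ℝ) → ℝ, Continuous g → ZPeriodic g →
        Tendsto
          (fun k => ∫ x in Q, (∫ ω, u k x ω * φ x * ψ (T ((ε k)⁻¹ • x) ω) *
              g (((ε k) ^ 2)⁻¹ • x) ∂μ))
          atTop
          (nhds (∫ x in Q, (∫ ω, (∫ y in Ycube N, u₀ x ω y * φ x * ψ ω * g y) ∂μ)))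

/-!
Write `F(x, ω, y, ·)` as the supremum of its affine minorants `λ ↦ ξ · λ - F*(x, ω, y; ξ)`, with `ξ`
in a countable dense set. Superlinear growth of `F` makes the Legendre transform `F*(·; ξ)` bounded
and continuous in `(x, y)`; it is periodic in `y`, so its averages along
`(x, T(x/ε)ω, x/ε²)` converge, and two-scale convergence lets each minorant pass to the limit when
it is tested against a nonnegative test function `θ(x, ω, y)`:
`∫ θ (ξ · V - F*(ξ)) ≤ liminf ∫ θ(x, T(x/ε)ω, x/ε²) F(x, T(x/ε)ω, x/ε², D)`.
Such localized lower bounds are stable under finite maxima, because indicators of measurable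
sets are `L¹`-limits of test functions with values in `[0, 1]`, which can therefore switch between
two minorants. The finite maxima increase to `F(V)`, and dominated convergence concludes.
-/

open scoped Pointwise

section Periodic

variable {N : ℕ} {g : (Fin N → ℝ) → ℝ}

lemma ycube_ae_eq_pi_Ico :
    Ycube N =ᵐ[volume] Set.pi Set.univ fun _ : Fin N => Set.Ico (0 : ℝ) 1 :=
  (Measure.univ_pi_Ico_ae_eq_Icc (μ := fun _ : Fin N => (volume : Measure ℝ))
    (f := 0) (g := 1)).symm

instance isProbabilityMeasure_restrict_ycube :
    IsProbabilityMeasure ((volume : Measure (Fin N → ℝ)).restrict (Ycube N)) :=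
  ⟨by simp [Ycube, Real.volume_Icc_pi]⟩

lemma norm_le_one_of_mem_ycube {z : Fin N → ℝ} (hz : z ∈ Ycube N) : ‖z‖ ≤ 1 :=
  (pi_norm_le_iff_of_nonneg zero_le_one).2 fun i =>
    (Real.norm_of_nonneg (hz.1 i)).trans_le (hz.2 i)

lemma fract_mem_ycube (y : Fin N → ℝ) : (fun i => Int.fract (y i)) ∈ Ycube N :=
  ⟨fun _ => Int.fract_nonneg _, fun _ => (Int.fract_lt_one _).le⟩

lemma ZPeriodic.apply_fract (hg : ZPeriodic g) (y : Fin N → ℝ) :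
    g (fun i => Int.fract (y i)) = g y := by
  rw [← hg _ fun i => ⌊y i⌋]
  congr 1
  ext i
  simp [Int.fract_add_floor]

lemma ZPeriodic.exists_abs_le (hg : ZPeriodic g) (hc : Continuous g) : ∃ C, ∀ y, |g y| ≤ C := by
  obtain ⟨C, hC⟩ := (isCompact_Icc (a := (0 : Fin N → ℝ)) (b := 1)).exists_bound_of_continuousOn
    hc.continuousOn
  exact ⟨C, fun y => hg.apply_fract y ▸ hC _ (fract_mem_ycube y)⟩

lemma exists_intCast_eq_of_mem_span_basisFun {v : Fin N → ℝ}
    (hv : v ∈ Submodule.span ℤ (Set.range (Pi.basisFun ℝ (Fin N)))) :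
    ∃ k : Fin N → ℤ, v = fun i => (k i : ℝ) := by
  choose k hk using (Module.Basis.mem_span_iff_repr_mem ℤ (Pi.basisFun ℝ (Fin N)) v).1 hv
  exact ⟨k, funext fun i => by simpa using (hk i).symm⟩

lemma ZPeriodic.setIntegral_add_left (hg : ZPeriodic g) (s : Fin N → ℝ) :
    ∫ z in Ycube N, g (s + z) = ∫ z in Ycube N, g z := by
  set cell := Set.pi Set.univ fun _ : Fin N => Set.Ico (0 : ℝ) 1
  rw [setIntegral_congr_set ycube_ae_eq_pi_Ico, setIntegral_congr_set ycube_ae_eq_pi_Ico]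
  have hcell := ZSpan.isAddFundamentalDomain' (Pi.basisFun ℝ (Fin N)) volume
  rw [ZSpan.fundamentalDomain_pi_basisFun] at hcell
  have : Countable (Submodule.span ℤ (Set.range (Pi.basisFun ℝ (Fin N)))).toAddSubgroup :=
    inferInstanceAs (Countable (Submodule.span ℤ (Set.range (Pi.basisFun ℝ (Fin N)))))
  have hshift : ∫ z in cell, g z = ∫ z in s +ᵥ cell, g z := by
    refine hcell.setIntegral_eq (hcell.vadd_of_comm s) ?_
    rintro ⟨v, hv⟩ x
    obtain ⟨k, rfl⟩ := exists_intCast_eq_of_mem_span_basisFun hv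
    rw [← hg x k, add_comm]
    rfl
  rw [hshift, ← Set.image_vadd]
  exact ((measurePreserving_add_left volume s).setIntegral_image_emb
    (measurableEmbedding_addLeft s) g cell).symm

end Periodic

section OscillatingAverages

variable {N : ℕ} {H : (Fin N → ℝ) → (Fin N → ℝ) → ℝ}

lemma tendsto_sub_of_zPeriodic (hH : Continuous (Function.uncurry H))
    (hper : ∀ x, ZPeriodic (H x)) {x : ℕ → Fin N → ℝ} {x₀ : Fin N → ℝ}
    (hx : Tendsto x atTop (𝓝 x₀)) (y : ℕ → Fin N → ℝ) :
    Tendsto (fun k => H (x k) (y k) - H x₀ (y k)) atTop (𝓝 0) := by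
  have : CompactSpace (Ycube N) := isCompact_iff_compactSpace.1 isCompact_Icc
  have hunif := Continuous.tendstoUniformly (fun x (z : Ycube N) => H x z)
    (hH.comp (by fun_prop :
      Continuous fun q : (Fin N → ℝ) × Ycube N => (q.1, (q.2 : Fin N → ℝ)))) x₀
  rw [Metric.tendsto_nhds]
  intro e he
  filter_upwards [hx.eventually (Metric.tendstoUniformly_iff.1 hunif e he)] with k hk
  have h := hk ⟨_, fract_mem_ycube (y k)⟩
  rw [(hper _).apply_fract, (hper _).apply_fract, dist_comm, Real.dist_eq] at h
  simpa [Real.dist_eq] using h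

lemma abs_le_indicator_closedBall_of_norm_sub_le {B r : ℝ} (hB : ∀ x y, |H x y| ≤ B)
    (hr : ∀ x, r < ‖x‖ → ∀ y, H x y = 0) {x x' : Fin N → ℝ} (hx : ‖x' - x‖ ≤ 1)
    (y : Fin N → ℝ) :
    |H x' y| ≤ (Metric.closedBall (0 : Fin N → ℝ) (r + 1)).indicator (fun _ => B) x := by
  by_cases h : x ∈ Metric.closedBall (0 : Fin N → ℝ) (r + 1)
  · rw [Set.indicator_of_mem h]
    exact hB _ _
  · rw [Set.indicator_of_notMem h, hr x' _ y, abs_zero]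
    rw [mem_closedBall_zero_iff, not_le] at h
    linarith [norm_sub_norm_le x x', norm_sub_rev x x']

variable {δ : ℝ}

lemma integral_prod_shift_eq (hδ : δ ≠ 0)
    (hi : Integrable (fun p : (Fin N → ℝ) × (Fin N → ℝ) => H (p.1 + δ • p.2) (δ⁻¹ • p.1 + p.2))
      ((volume : Measure (Fin N → ℝ)).prod (volume.restrict (Ycube N)))) :
    ∫ p, H (p.1 + δ • p.2) (δ⁻¹ • p.1 + p.2)
        ∂(volume : Measure (Fin N → ℝ)).prod (volume.restrict (Ycube N)) =
      ∫ x, H x (δ⁻¹ • x) := by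
  have hz (z : Fin N → ℝ) : ∫ x, H (x + δ • z) (δ⁻¹ • x + z) = ∫ x, H x (δ⁻¹ • x) := by
    rw [← integral_add_right_eq_self (fun x => H x (δ⁻¹ • x)) (δ • z)]
    simp only [smul_add, smul_smul, inv_mul_cancel₀ hδ, one_smul]
  rw [integral_prod_symm _ hi]
  simp only [hz, integral_const, probReal_univ, one_smul]

lemma integral_prod_translate_eq (hper : ∀ x, ZPeriodic (H x))
    (hi : Integrable (fun p : (Fin N → ℝ) × (Fin N → ℝ) => H p.1 (δ⁻¹ • p.1 + p.2))
      ((volume : Measure (Fin N → ℝ)).prod (volume.restrict (Ycube N)))) :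
    ∫ p, H p.1 (δ⁻¹ • p.1 + p.2)
        ∂(volume : Measure (Fin N → ℝ)).prod (volume.restrict (Ycube N)) =
      ∫ x, ∫ y in Ycube N, H x y := by
  rw [integral_prod _ hi]
  exact integral_congr_ae (ae_of_all _ fun x => (hper x).setIntegral_add_left (δ⁻¹ • x))

-- Averaging the translates `x ↦ x + δ z` over `z ∈ Y` turns `∫ H (x, x / δ)` into a double
-- integral in which only the slow variable still depends on the translation.
lemma tendsto_integral_oscillating (hH : Continuous (Function.uncurry H))
    (hper : ∀ x, ZPeriodic (H x)) {B r : ℝ} (hB : ∀ x y, |H x y| ≤ B)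
    (hr : ∀ x, r < ‖x‖ → ∀ y, H x y = 0)
    {δ : ℕ → ℝ} (hδ : ∀ k, δ k ∈ Set.Ioc (0 : ℝ) 1) (hδ0 : Tendsto δ atTop (𝓝 0)) :
    Tendsto (fun k => ∫ x, H x ((δ k)⁻¹ • x)) atTop (𝓝 (∫ x, ∫ y in Ycube N, H x y)) := by
  set m := (volume : Measure (Fin N → ℝ)).prod (volume.restrict (Ycube N))
  let W (k : ℕ) (p : (Fin N → ℝ) × (Fin N → ℝ)) := H (p.1 + δ k • p.2) ((δ k)⁻¹ • p.1 + p.2)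
  let W' (k : ℕ) (p : (Fin N → ℝ) × (Fin N → ℝ)) := H p.1 ((δ k)⁻¹ • p.1 + p.2)
  let bd (p : (Fin N → ℝ) × (Fin N → ℝ)) :=
    (Metric.closedBall (0 : Fin N → ℝ) (r + 1)).indicator (fun _ => B) p.1
  have hbd : Integrable bd m :=
    ((integrable_indicator_iff Metric.isClosed_closedBall.measurableSet).2
      (integrableOn_const (isCompact_closedBall _ _).measure_lt_top.ne)).comp_fst _
  have hW_le (k) : ∀ᵐ p ∂m, ‖W k p‖ ≤ bd p := by
    filter_upwards [Measure.quasiMeasurePreserving_snd.ae (ae_restrict_mem measurableSet_Icc)]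
      with p hp
    refine abs_le_indicator_closedBall_of_norm_sub_le hB hr ?_ _
    rw [add_sub_cancel_left, norm_smul, Real.norm_of_nonneg (hδ k).1.le]
    exact mul_le_one₀ (hδ k).2 (norm_nonneg _) (norm_le_one_of_mem_ycube hp)
  have hW'_le (k) : ∀ᵐ p ∂m, ‖W' k p‖ ≤ bd p :=
    ae_of_all _ fun p => abs_le_indicator_closedBall_of_norm_sub_le hB hr (by simp) _
  have hWc (k) : Continuous (W k) := hH.comp (by fun_prop :
    Continuous fun p : (Fin N → ℝ) × (Fin N → ℝ) => (p.1 + δ k • p.2, (δ k)⁻¹ • p.1 + p.2))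
  have hW'c (k) : Continuous (W' k) := hH.comp (by fun_prop :
    Continuous fun p : (Fin N → ℝ) × (Fin N → ℝ) => (p.1, (δ k)⁻¹ • p.1 + p.2))
  have hWi (k) : Integrable (W k) m := hbd.mono' (hWc k).aestronglyMeasurable (hW_le k)
  have hW'i (k) : Integrable (W' k) m := hbd.mono' (hW'c k).aestronglyMeasurable (hW'_le k)
  have hlim : Tendsto (fun k => ∫ p, (W k p - W' k p) ∂m) atTop (𝓝 (∫ _, (0 : ℝ) ∂m)) := by
    refine tendsto_integral_of_dominated_convergence (fun p => bd p + bd p)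
      (fun k => ((hWc k).sub (hW'c k)).aestronglyMeasurable) (hbd.add hbd) (fun k => ?_)
      (ae_of_all _ fun p => tendsto_sub_of_zPeriodic hH hper ?_ _)
    · filter_upwards [hW_le k, hW'_le k] with p h h'
      exact (norm_sub_le _ _).trans (add_le_add h h')
    · simpa using (hδ0.smul_const p.2).const_add p.1
  have hsub (k) : ∫ p, (W k p - W' k p) ∂m =
      (∫ x, H x ((δ k)⁻¹ • x)) - ∫ x, ∫ y in Ycube N, H x y := by
    rw [integral_sub (hWi k) (hW'i k), integral_prod_shift_eq (hδ k).1.ne' (hWi k),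
      integral_prod_translate_eq hper (hW'i k)]
  simp only [hsub, integral_zero] at hlim
  exact tendsto_sub_nhds_zero_iff.1 hlim

end OscillatingAverages

section Approximation

lemma indicator_one_mem_Icc {X : Type*} (A : Set X) (p : X) :
    A.indicator (1 : X → ℝ) p ∈ Set.Icc (0 : ℝ) 1 := by
  by_cases hp : p ∈ A <;> simp [hp]

variable {X : Type*} [MeasurableSpace X] {m : Measure X} {𝒜 : Subalgebra ℝ (X → ℝ)} {A B : Set X}

/-- `A` is measurable and its indicator is a limit in `L¹(m)` of `[0,1]`-valued members of the
algebra `𝒜`. The bounds on the values let products of such approximations with nonnegative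
members of `𝒜` stay nonnegative. -/
def IsApproximable (𝒜 : Subalgebra ℝ (X → ℝ)) (m : Measure X) (A : Set X) : Prop :=
  MeasurableSet A ∧ ∀ η : ℝ≥0∞, 0 < η → ∃ χ ∈ 𝒜, (∀ p, χ p ∈ Set.Icc (0 : ℝ) 1) ∧
    ∫⁻ p, ‖χ p - A.indicator 1 p‖ₑ ∂m ≤ η

lemma isApproximable_of_tendsto [IsFiniteMeasure m] (hA : MeasurableSet A) {χ : ℕ → X → ℝ}
    (hχ : ∀ n, χ n ∈ 𝒜) (hχm : ∀ n, Measurable (χ n)) (hχ01 : ∀ n p, χ n p ∈ Set.Icc (0 : ℝ) 1)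
    (hlim : ∀ p, Tendsto (fun n => χ n p) atTop (𝓝 (A.indicator 1 p))) :
    IsApproximable 𝒜 m A := by
  refine ⟨hA, fun η hη => ?_⟩
  have hL1 : Tendsto (fun n => ∫⁻ p, ‖χ n p - A.indicator 1 p‖ₑ ∂m) atTop
      (𝓝 (∫⁻ _, 0 ∂m)) := by
    refine tendsto_lintegral_of_dominated_convergence (fun _ => 1)
      (fun n => ((hχm n).sub (measurable_one.indicator hA)).enorm)
      (fun n => ae_of_all _ fun p => ?_) (by simp) (ae_of_all _ fun p => ?_)
    · beta_reduce
      rw [Real.enorm_eq_ofReal_abs, ENNReal.ofReal_le_one]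
      have h := hχ01 n p
      have h' := indicator_one_mem_Icc A p
      exact abs_le.2 ⟨by linarith [h.1, h'.2], by linarith [h.2, h'.1]⟩
    · simpa using ((hlim p).sub_const (A.indicator 1 p)).enorm
  rw [lintegral_zero] at hL1
  obtain ⟨n, hn⟩ := (hL1.eventually (gt_mem_nhds hη)).exists
  exact ⟨χ n, hχ n, hχ01 n, hn.le⟩

lemma isApproximable_of_indicator_mem (hA : MeasurableSet A) (h : A.indicator 1 ∈ 𝒜) :
    IsApproximable 𝒜 m A :=
  ⟨hA, fun η _ => ⟨_, h, indicator_one_mem_Icc A, by simp⟩⟩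

lemma isApproximable_pos [IsFiniteMeasure m] {χ : X → ℝ} (hχ : χ ∈ 𝒜) (hχm : Measurable χ)
    (hχ01 : ∀ p, χ p ∈ Set.Icc (0 : ℝ) 1) : IsApproximable 𝒜 m {p | 0 < χ p} := by
  have hpow (n : ℕ) (p : X) : (1 - χ p) ^ n ∈ Set.Icc (0 : ℝ) 1 :=
    ⟨pow_nonneg (by linarith [(hχ01 p).2]) _,
      pow_le_one₀ (by linarith [(hχ01 p).2]) (by linarith [(hχ01 p).1])⟩
  refine isApproximable_of_tendsto (χ := fun n => 1 - (1 - χ) ^ n)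
    (measurableSet_lt measurable_const hχm)
    (fun n => sub_mem (one_mem _) (pow_mem (sub_mem (one_mem _) hχ) n))
    (fun n => measurable_one.sub ((measurable_one.sub hχm).pow_const n)) (fun n p => ?_)
    (fun p => ?_)
  · have h := hpow n p
    simp only [Pi.sub_apply, Pi.one_apply, Pi.pow_apply]
    exact ⟨by linarith [h.2], by linarith [h.1]⟩
  · rcases (hχ01 p).1.eq_or_lt with h0 | h0
    · simp [← h0]
    · have hzero := tendsto_pow_atTop_nhds_zero_of_lt_one
        (by linarith [(hχ01 p).2] : 0 ≤ 1 - χ p) (by linarith)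
      simpa [h0] using hzero.const_sub 1

lemma IsApproximable.congr_ae (hA : IsApproximable 𝒜 m A) (hB : MeasurableSet B)
    (hAB : A =ᵐ[m] B) : IsApproximable 𝒜 m B := by
  refine ⟨hB, fun η hη => ?_⟩
  obtain ⟨χ, hχ, hχ01, hχA⟩ := hA.2 η hη
  refine ⟨χ, hχ, hχ01, hχA.trans_eq' (lintegral_congr_ae ?_)⟩
  filter_upwards [indicator_ae_eq_of_ae_eq_set (f := (1 : X → ℝ)) hAB] with p hp
  rw [hp]

lemma IsApproximable.compl (hA : IsApproximable 𝒜 m A) : IsApproximable 𝒜 m Aᶜ := by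
  refine ⟨hA.1.compl, fun η hη => ?_⟩
  obtain ⟨χ, hχ, hχ01, hχA⟩ := hA.2 η hη
  refine ⟨1 - χ, sub_mem (one_mem _) hχ, fun p => ?_, ?_⟩
  · exact ⟨by simpa using (hχ01 p).2, by simpa using (hχ01 p).1⟩
  · convert hχA using 3 with p
    rw [Set.indicator_compl, ← enorm_neg]
    simp

lemma abs_mul_sub_mul_le {a b s t : ℝ} (hb : b ∈ Set.Icc (0 : ℝ) 1) (hs : s ∈ Set.Icc (0 : ℝ) 1) :
    |a * b - s * t| ≤ |a - s| + |b - t| :=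
  calc |a * b - s * t| = |(a - s) * b + s * (b - t)| := by ring_nf
    _ ≤ |a - s| * |b| + |s| * |b - t| := by
      rw [← abs_mul, ← abs_mul]
      exact abs_add_le _ _
    _ ≤ |a - s| * 1 + 1 * |b - t| := by
      rw [abs_of_nonneg hb.1, abs_of_nonneg hs.1]
      gcongr
      exacts [hb.2, hs.2]
    _ = |a - s| + |b - t| := by ring

lemma IsApproximable.inter (h𝒜 : ∀ χ ∈ 𝒜, Measurable χ) (hA : IsApproximable 𝒜 m A)
    (hB : IsApproximable 𝒜 m B) : IsApproximable 𝒜 m (A ∩ B) := by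
  refine ⟨hA.1.inter hB.1, fun η hη => ?_⟩
  obtain ⟨χ, hχ, hχ01, hχA⟩ := hA.2 (η / 2) (ENNReal.half_pos hη.ne')
  obtain ⟨ρ, hρ, hρ01, hρB⟩ := hB.2 (η / 2) (ENNReal.half_pos hη.ne')
  refine ⟨χ * ρ, mul_mem hχ hρ, fun p => ⟨mul_nonneg (hχ01 p).1 (hρ01 p).1,
    mul_le_one₀ (hχ01 p).2 (hρ01 p).1 (hρ01 p).2⟩, ?_⟩
  have hm : Measurable fun p => ‖χ p - A.indicator 1 p‖ₑ :=
    ((h𝒜 χ hχ).sub (measurable_one.indicator hA.1)).enorm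
  calc ∫⁻ p, ‖(χ * ρ) p - (A ∩ B).indicator 1 p‖ₑ ∂m
      ≤ ∫⁻ p, (‖χ p - A.indicator 1 p‖ₑ + ‖ρ p - B.indicator 1 p‖ₑ) ∂m := by
        refine lintegral_mono fun p => ?_
        rw [Set.inter_indicator_one, Pi.mul_apply, Pi.mul_apply]
        simp only [Real.enorm_eq_ofReal_abs]
        rw [← ENNReal.ofReal_add (abs_nonneg _) (abs_nonneg _)]
        exact ENNReal.ofReal_le_ofReal
          (abs_mul_sub_mul_le (hρ01 p) (indicator_one_mem_Icc A p))
    _ ≤ η / 2 + η / 2 := by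
        rw [lintegral_add_left hm]
        exact add_le_add hχA hρB
    _ = η := ENNReal.add_halves η

lemma isApproximable_biInter_lt (h𝒜 : ∀ χ ∈ 𝒜, Measurable χ) {s : ℕ → Set X}
    (hs : ∀ i, IsApproximable 𝒜 m (s i)) (n : ℕ) : IsApproximable 𝒜 m (⋂ i < n, s i) := by
  induction n with
  | zero =>
    simpa using isApproximable_of_indicator_mem MeasurableSet.univ
      (by simp : Set.univ.indicator (1 : X → ℝ) ∈ 𝒜)
  | succ n ih =>
    rw [Set.biInter_lt_succ]
    exact ih.inter h𝒜 (hs n)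

lemma tendsto_measure_biInter_lt_diff [IsFiniteMeasure m] {s : ℕ → Set X}
    (hs : ∀ i, MeasurableSet (s i)) :
    Tendsto (fun n => m ((⋂ i < n, s i) \ ⋂ i, s i)) atTop (𝓝 0) := by
  have hanti : Antitone fun n => (⋂ i < n, s i) \ ⋂ i, s i := fun a b hab =>
    Set.sdiff_subset_sdiff_left (Set.biInter_subset_biInter_left fun i hi => lt_of_lt_of_le hi hab)
  have hempty : ⋂ n, ((⋂ i < n, s i) \ ⋂ i, s i) = ∅ := by
    refine Set.eq_empty_of_forall_notMem fun p hp => ?_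
    rw [Set.mem_iInter] at hp
    exact (hp 0).2 (Set.mem_iInter.2 fun i => Set.mem_iInter₂.1 (hp (i + 1)).1 i (lt_add_one i))
  have hmeas (n : ℕ) : MeasurableSet ((⋂ i < n, s i) \ ⋂ i, s i) :=
    (MeasurableSet.iInter fun i => MeasurableSet.iInter fun _ => hs i).diff
      (MeasurableSet.iInter hs)
  simpa only [hempty, measure_empty, Function.comp_def] using tendsto_measure_iInter_atTop
    (fun n => (hmeas n).nullMeasurableSet) hanti ⟨0, measure_ne_top m _⟩

lemma isApproximable_iInter [IsFiniteMeasure m] (h𝒜 : ∀ χ ∈ 𝒜, Measurable χ) {s : ℕ → Set X}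
    (hs : ∀ i, IsApproximable 𝒜 m (s i)) : IsApproximable 𝒜 m (⋂ i, s i) := by
  have hsm : MeasurableSet (⋂ i, s i) := MeasurableSet.iInter fun i => (hs i).1
  refine ⟨hsm, fun η hη => ?_⟩
  obtain ⟨n, hn⟩ := ((tendsto_measure_biInter_lt_diff (m := m) fun i => (hs i).1).eventually
    (gt_mem_nhds (ENNReal.half_pos hη.ne'))).exists
  have hS := isApproximable_biInter_lt h𝒜 hs n
  set S := ⋂ i < n, s i
  obtain ⟨χ, hχ, hχ01, hχS⟩ := hS.2 (η / 2) (ENNReal.half_pos hη.ne')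
  refine ⟨χ, hχ, hχ01, ?_⟩
  have hsub : ⋂ i, s i ⊆ S := Set.subset_iInter₂ fun i _ => Set.iInter_subset s i
  calc ∫⁻ p, ‖χ p - (⋂ i, s i).indicator 1 p‖ₑ ∂m
      ≤ ∫⁻ p, (‖χ p - S.indicator 1 p‖ₑ + (S \ ⋂ i, s i).indicator 1 p) ∂m := by
        refine lintegral_mono fun p => ?_
        by_cases hp : p ∈ ⋂ i, s i
        · simp [hp, hsub hp]
        · by_cases hpS : p ∈ S
          · simpa [hp, hpS] using enorm_add_le (χ p - 1) 1
          · simp [hp, hpS]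
    _ ≤ η / 2 + η / 2 := by
        rw [lintegral_add_right _ (measurable_one.indicator (hS.1.diff hsm)),
          lintegral_indicator_one (hS.1.diff hsm)]
        exact add_le_add hχS hn.le
    _ = η := ENNReal.add_halves η

/-- The `σ`-algebra of the sets approximable by the algebra `𝒜`. -/
@[reducible] def approximableSpace [IsFiniteMeasure m] (h𝒜 : ∀ χ ∈ 𝒜, Measurable χ) :
    MeasurableSpace X where
  MeasurableSet' := IsApproximable 𝒜 m
  measurableSet_empty := isApproximable_of_indicator_mem MeasurableSet.empty
    (by rw [Set.indicator_empty']; exact zero_mem 𝒜)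
  measurableSet_compl _ := IsApproximable.compl
  measurableSet_iUnion s hs := by
    rw [← compl_compl (⋃ i, s i), Set.compl_iUnion]
    exact (isApproximable_iInter h𝒜 fun i => (hs i).compl).compl

lemma IsApproximable.exists_tendsto_ae [IsFiniteMeasure m] (h𝒜 : ∀ χ ∈ 𝒜, Measurable χ)
    (hA : IsApproximable 𝒜 m A) :
    ∃ χ : ℕ → X → ℝ, (∀ n, χ n ∈ 𝒜) ∧ (∀ n p, χ n p ∈ Set.Icc (0 : ℝ) 1) ∧
      ∀ᵐ p ∂m, Tendsto (fun n => χ n p) atTop (𝓝 (A.indicator 1 p)) := by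
  choose χ hχ hχ01 hχA using fun n : ℕ => hA.2 (n : ℝ≥0∞)⁻¹ (by simp)
  have hL1 : Tendsto (fun n => eLpNorm (χ n - A.indicator 1) 1 m) atTop (𝓝 0) := by
    simp only [eLpNorm_one_eq_lintegral_enorm]
    exact tendsto_of_tendsto_of_tendsto_of_le_of_le tendsto_const_nhds
      ENNReal.tendsto_inv_nat_nhds_zero (fun _ => zero_le) hχA
  obtain ⟨ns, -, hns⟩ := (tendstoInMeasure_of_tendsto_eLpNorm one_ne_zero
    (fun n => (h𝒜 _ (hχ n)).aestronglyMeasurable)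
    (measurable_one.indicator hA.1).aestronglyMeasurable hL1).exists_seq_tendsto_ae
  exact ⟨fun n => χ (ns n), fun n => hχ _, fun n => hχ01 _, hns⟩

lemma integrable_comp_mul {Z : Type*} [MeasurableSpace Z] {ν : Measure Z} {S : Z → X} {a : X → ℝ}
    {u : Z → ℝ} (ha : Measurable a) (hab : ∃ C, ∀ p, |a p| ≤ C) (hS : Measurable S)
    (hu : Integrable u ν) : Integrable (fun z => a (S z) * u z) ν := by
  obtain ⟨C, hC⟩ := hab
  exact hu.bdd_mul (ha.comp hS).aestronglyMeasurable (ae_of_all _ fun z => hC (S z))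

end Approximation

section TestFunctions

/-- The space of points `((x, ω), y)` with slow variable `x`, stochastic variable `ω` and fast
periodic variable `y`. -/
abbrev TwoScaleSpace (N : ℕ) (Ω : Type*) := ((Fin N → ℝ) × Ω) × (Fin N → ℝ)

lemma bounded_mul {α : Type*} {a b : α → ℝ} (ha : ∃ C, ∀ x, |a x| ≤ C)
    (hb : ∃ C, ∀ x, |b x| ≤ C) : ∃ C, ∀ x, |a x * b x| ≤ C := by
  obtain ⟨A, hA⟩ := ha
  obtain ⟨B, hB⟩ := hb
  refine ⟨A * B, fun x => ?_⟩
  rw [abs_mul]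
  exact mul_le_mul (hA x) (hB x) (abs_nonneg _) ((abs_nonneg _).trans (hA x))

variable {N : ℕ} {Ω : Type*} [MeasurableSpace Ω]

/-- Bounded measurable functions of `((x, ω), y)` that are continuous in `(x, y)` and periodic in
`y`: the class of functions whose traces along `y = x / ε²` can be averaged. -/
structure IsAdmissible (a : TwoScaleSpace N Ω → ℝ) : Prop where
  measurable : Measurable a
  continuous : ∀ ω, Continuous fun q : (Fin N → ℝ) × (Fin N → ℝ) => a ((q.1, ω), q.2)
  periodic : ∀ x ω, ZPeriodic fun y => a ((x, ω), y)
  bounded : ∃ C, ∀ p, |a p| ≤ C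

variable (N Ω) in
/-- The algebra of admissible functions. -/
def admissibleAlgebra : Subalgebra ℝ (TwoScaleSpace N Ω → ℝ) where
  carrier := {a | IsAdmissible a}
  mul_mem' {a b} ha hb :=
    ⟨ha.measurable.mul hb.measurable, fun ω => (ha.continuous ω).mul (hb.continuous ω),
      fun x ω y k => congrArg₂ (· * ·) (ha.periodic x ω y k) (hb.periodic x ω y k),
      bounded_mul ha.bounded hb.bounded⟩
  add_mem' {a b} ha hb := by
    refine ⟨ha.measurable.add hb.measurable, fun ω => (ha.continuous ω).add (hb.continuous ω),
      fun x ω y k => congrArg₂ (· + ·) (ha.periodic x ω y k) (hb.periodic x ω y k), ?_⟩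
    obtain ⟨A, hA⟩ := ha.bounded
    obtain ⟨B, hB⟩ := hb.bounded
    exact ⟨A + B, fun p => (abs_add_le _ _).trans (add_le_add (hA p) (hB p))⟩
  algebraMap_mem' r :=
    ⟨measurable_const, fun _ => continuous_const, fun _ _ _ _ => rfl, |r|, fun _ => le_rfl⟩

lemma isAdmissible_slow {φ : (Fin N → ℝ) → ℝ} (hφ : Continuous φ) (hφb : ∃ C, ∀ x, |φ x| ≤ C) :
    IsAdmissible fun p : TwoScaleSpace N Ω => φ p.1.1 :=
  ⟨hφ.measurable.comp (by fun_prop), fun _ => by fun_prop, fun _ _ _ _ => rfl,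
    hφb.imp fun _ hC _ => hC _⟩

lemma isAdmissible_stochastic {ψ : Ω → ℝ} (hψ : Measurable ψ) (hψb : ∃ C, ∀ ω, |ψ ω| ≤ C) :
    IsAdmissible fun p : TwoScaleSpace N Ω => ψ p.1.2 :=
  ⟨hψ.comp (by fun_prop), fun _ => by fun_prop, fun _ _ _ _ => rfl, hψb.imp fun _ hC _ => hC _⟩

lemma isAdmissible_fast {g : (Fin N → ℝ) → ℝ} (hg : Continuous g) (hgp : ZPeriodic g) :
    IsAdmissible fun p : TwoScaleSpace N Ω => g p.2 :=
  ⟨hg.measurable.comp measurable_snd, fun _ => by fun_prop, fun _ _ => hgp,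
    (hgp.exists_abs_le hg).imp fun _ hC _ => hC _⟩

variable (N Ω) in
/-- The monoid of the products `φ(x) ψ(ω) g(y)` appearing in the definition of weak stochastic
two-scale convergence, with the compact support of `φ` relaxed to boundedness. -/
def elementaryTests : Submonoid (TwoScaleSpace N Ω → ℝ) where
  carrier := {a | ∃ (φ : (Fin N → ℝ) → ℝ) (ψ : Ω → ℝ) (g : (Fin N → ℝ) → ℝ),
    ContDiff ℝ (⊤ : ℕ∞) φ ∧ (∃ C, ∀ x, |φ x| ≤ C) ∧ Measurable ψ ∧ (∃ C, ∀ ω, |ψ ω| ≤ C) ∧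
      Continuous g ∧ ZPeriodic g ∧ a = fun p => φ p.1.1 * ψ p.1.2 * g p.2}
  one_mem' := ⟨1, 1, 1, contDiff_const, ⟨1, by simp⟩, measurable_const, ⟨1, by simp⟩,
    continuous_const, fun _ _ => rfl, by ext; simp⟩
  mul_mem' := by
    rintro _ _ ⟨φ, ψ, g, hφ, hφb, hψ, hψb, hg, hgp, rfl⟩
      ⟨φ', ψ', g', hφ', hφb', hψ', hψb', hg', hgp', rfl⟩
    refine ⟨fun x => φ x * φ' x, fun ω => ψ ω * ψ' ω, fun y => g y * g' y, hφ.mul hφ',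
      bounded_mul hφb hφb', hψ.mul hψ', bounded_mul hψb hψb', hg.mul hg',
      fun y k => congrArg₂ (· * ·) (hgp y k) (hgp' y k), ?_⟩
    ext p
    simp only [Pi.mul_apply]
    ring

variable (N Ω) in
/-- The algebra of test functions, generated by the elementary ones. -/
def testAlgebra : Subalgebra ℝ (TwoScaleSpace N Ω → ℝ) :=
  Algebra.adjoin ℝ (elementaryTests N Ω)

lemma testAlgebra_le_admissibleAlgebra : testAlgebra N Ω ≤ admissibleAlgebra N Ω := by
  refine Algebra.adjoin_le ?_
  rintro _ ⟨φ, ψ, g, hφ, hφb, hψ, hψb, hg, hgp, rfl⟩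
  exact mul_mem (mul_mem (isAdmissible_slow hφ.continuous hφb) (isAdmissible_stochastic hψ hψb))
    (isAdmissible_fast hg hgp)

lemma isAdmissible_of_mem_testAlgebra {θ : TwoScaleSpace N Ω → ℝ} (hθ : θ ∈ testAlgebra N Ω) :
    IsAdmissible θ :=
  testAlgebra_le_admissibleAlgebra hθ

lemma mem_testAlgebra_iff {θ : TwoScaleSpace N Ω → ℝ} :
    θ ∈ testAlgebra N Ω ↔
      θ ∈ Submodule.span ℝ (elementaryTests N Ω : Set (TwoScaleSpace N Ω → ℝ)) := by
  rw [testAlgebra, ← Subalgebra.mem_toSubmodule, Algebra.adjoin_eq_span, Submonoid.closure_eq]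

@[elab_as_elim]
lemma testAlgebra_induction {motive : ∀ a, a ∈ testAlgebra N Ω → Prop}
    (elementary : ∀ a (ha : a ∈ elementaryTests N Ω), motive a (Algebra.subset_adjoin ha))
    (zero : motive 0 (zero_mem _))
    (add : ∀ a b ha hb, motive a ha → motive b hb → motive (a + b) (add_mem ha hb))
    (smul : ∀ (c : ℝ) a ha, motive a ha → motive (c • a) (Subalgebra.smul_mem _ ha c))
    {θ : TwoScaleSpace N Ω → ℝ} (hθ : θ ∈ testAlgebra N Ω) : motive θ hθ :=
  Submodule.span_induction (p := fun a ha => motive a (mem_testAlgebra_iff.2 ha)) elementary zero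
    (fun a b ha hb => add a b (mem_testAlgebra_iff.2 ha) (mem_testAlgebra_iff.2 hb))
    (fun c a ha => smul c a (mem_testAlgebra_iff.2 ha)) (mem_testAlgebra_iff.1 hθ)

lemma slow_mem_testAlgebra {φ : (Fin N → ℝ) → ℝ} (hφ : ContDiff ℝ (⊤ : ℕ∞) φ)
    (hφb : ∃ C, ∀ x, |φ x| ≤ C) : (fun p => φ p.1.1) ∈ testAlgebra N Ω :=
  Algebra.subset_adjoin ⟨φ, 1, 1, hφ, hφb, measurable_const, ⟨1, by simp⟩, continuous_const,
    fun _ _ => rfl, by simp⟩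

lemma stochastic_mem_testAlgebra {ψ : Ω → ℝ} (hψ : Measurable ψ) (hψb : ∃ C, ∀ ω, |ψ ω| ≤ C) :
    (fun p => ψ p.1.2) ∈ testAlgebra N Ω :=
  Algebra.subset_adjoin ⟨1, ψ, 1, contDiff_const, ⟨1, by simp⟩, hψ, hψb, continuous_const,
    fun _ _ => rfl, by simp⟩

lemma fast_mem_testAlgebra {g : (Fin N → ℝ) → ℝ} (hg : Continuous g) (hgp : ZPeriodic g) :
    (fun p => g p.2) ∈ testAlgebra N Ω :=
  Algebra.subset_adjoin ⟨1, 1, g, contDiff_const, ⟨1, by simp⟩, measurable_const, ⟨1, by simp⟩,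
    hg, hgp, by simp⟩

lemma isApproximable_slow {m : Measure (TwoScaleSpace N Ω)} [IsFiniteMeasure m]
    {U : Set (Fin N → ℝ)} (hU : IsOpen U) :
    IsApproximable (testAlgebra N Ω) m {p | p.1.1 ∈ U} := by
  obtain ⟨φ, hφU, hφ, hφ01⟩ := hU.exists_contDiff_support_eq (n := ⊤)
  have hφ01 (x) : φ x ∈ Set.Icc (0 : ℝ) 1 := hφ01 ⟨x, rfl⟩
  have hmem := slow_mem_testAlgebra (Ω := Ω) hφ
    ⟨1, fun x => abs_le.2 ⟨by linarith [(hφ01 x).1], (hφ01 x).2⟩⟩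
  have hset : {p : TwoScaleSpace N Ω | p.1.1 ∈ U} = {p | 0 < φ p.1.1} := by
    ext p
    rw [Set.mem_ofPred_eq, Set.mem_ofPred_eq, ← hφU, Function.mem_support,
      (hφ01 p.1.1).1.lt_iff_ne']
  rw [hset]
  exact isApproximable_pos hmem (isAdmissible_of_mem_testAlgebra hmem).measurable
    (fun p => hφ01 p.1.1)

lemma isApproximable_stochastic {m : Measure (TwoScaleSpace N Ω)} {E : Set Ω}
    (hE : MeasurableSet E) : IsApproximable (testAlgebra N Ω) m {p | p.1.2 ∈ E} := by
  refine isApproximable_of_indicator_mem (hE.preimage (by fun_prop)) ?_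
  refine stochastic_mem_testAlgebra (measurable_one.indicator hE) ⟨1, fun ω => ?_⟩
  have h := indicator_one_mem_Icc E ω
  exact abs_le.2 ⟨by linarith [h.1], h.2⟩

/-- A continuous `1`-periodic function on `ℝ`, positive exactly at the points whose fractional part
lies in `G ∩ (0, 1)` when `G` is open. -/
def periodicBump (G : Set ℝ) (t : ℝ) : ℝ := Metric.infDist (Int.fract t) (G ∩ Set.Ioo 0 1)ᶜ

lemma continuous_periodicBump (G : Set ℝ) : Continuous (periodicBump G) := by
  refine ContinuousOn.comp_fract'' (f := fun t => Metric.infDist t (G ∩ Set.Ioo 0 1)ᶜ)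
    (Metric.continuous_infDist_pt _).continuousOn ?_
  rw [Metric.infDist_zero_of_mem (by simp), Metric.infDist_zero_of_mem (by simp)]

lemma periodicBump_mem_Icc (G : Set ℝ) (t : ℝ) : periodicBump G t ∈ Set.Icc (0 : ℝ) 1 := by
  refine ⟨Metric.infDist_nonneg, ?_⟩
  have hdist : periodicBump G t ≤ dist (Int.fract t) 0 := Metric.infDist_le_dist_of_mem (by simp)
  rw [dist_zero_right, Real.norm_of_nonneg (Int.fract_nonneg t)] at hdist
  exact hdist.trans (Int.fract_lt_one t).le

lemma periodicBump_pos_iff {G : Set ℝ} (hG : IsOpen G) {t : ℝ} (ht : t ∈ Set.Ioo (0 : ℝ) 1) :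
    0 < periodicBump G t ↔ t ∈ G := by
  rw [periodicBump, ← (hG.inter isOpen_Ioo).isClosed_compl.notMem_iff_infDist_pos ⟨0, by simp⟩,
    Int.fract_eq_self.2 ⟨ht.1.le, ht.2⟩]
  simp [ht.1, ht.2]

lemma isApproximable_fast {m : Measure (TwoScaleSpace N Ω)} [IsFiniteMeasure m]
    (hm : ∀ᵐ p ∂m, ∀ i, p.2 i ∈ Set.Ioo (0 : ℝ) 1) (i : Fin N) {G : Set ℝ} (hG : IsOpen G) :
    IsApproximable (testAlgebra N Ω) m {p | p.2 i ∈ G} := by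
  have hmem := fast_mem_testAlgebra (Ω := Ω) (g := fun y : Fin N → ℝ => periodicBump G (y i))
    ((continuous_periodicBump G).comp (continuous_apply i))
    (fun y k => by simp [periodicBump])
  refine (isApproximable_pos hmem (isAdmissible_of_mem_testAlgebra hmem).measurable
    (fun p => periodicBump_mem_Icc G (p.2 i))).congr_ae (hG.measurableSet.preimage (by fun_prop)) ?_
  filter_upwards [hm] with p hp
  exact propext (periodicBump_pos_iff hG (hp i))

lemma isApproximable_testAlgebra {m : Measure (TwoScaleSpace N Ω)} [IsFiniteMeasure m]
    (hm : ∀ᵐ p ∂m, ∀ i, p.2 i ∈ Set.Ioo (0 : ℝ) 1) {A : Set (TwoScaleSpace N Ω)}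
    (hA : MeasurableSet A) : IsApproximable (testAlgebra N Ω) m A := by
  let σ := approximableSpace (m := m) (𝒜 := testAlgebra N Ω)
    fun χ hχ => (isAdmissible_of_mem_testAlgebra hχ).measurable
  have hx : Measurable[σ] fun p : TwoScaleSpace N Ω => p.1.1 :=
    @measurable_of_isOpen _ _ _ _ _ σ _ fun U hU => isApproximable_slow hU
  have hω : Measurable[σ] fun p : TwoScaleSpace N Ω => p.1.2 := fun E hE =>
    isApproximable_stochastic hE
  have hy : Measurable[σ] fun p : TwoScaleSpace N Ω => p.2 :=
    @measurable_pi_lambda _ _ _ σ _ _ fun i =>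
      @measurable_of_isOpen _ _ _ _ _ σ _ fun G hG => isApproximable_fast hm i hG
  exact ((hx.prodMk hω).prodMk hy) hA

end TestFunctions

section Oscillation

variable {N : ℕ} {Ω : Type*} [MeasurableSpace Ω] {μ : Measure Ω} {Q : Set (Fin N → ℝ)}
  {T : (Fin N → ℝ) → Ω → Ω} {ε : ℕ → ℝ} {a : TwoScaleSpace N Ω → ℝ}

/-- The product measure `dx dμ(ω) dy` on `Q × Ω × Y`. -/
abbrev twoScaleMeasure (Q : Set (Fin N → ℝ)) (μ : Measure Ω) : Measure (TwoScaleSpace N Ω) :=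
  ((volume.restrict Q).prod μ).prod (volume.restrict (Ycube N))

/-- The map `(x, ω) ↦ (x, T(x/ε)ω, x/ε²)` along which functions of three variables oscillate. -/
def twoScaleMap (T : (Fin N → ℝ) → Ω → Ω) (ε : ℝ) (p : (Fin N → ℝ) × Ω) : TwoScaleSpace N Ω :=
  ((p.1, T (ε⁻¹ • p.1) p.2), (ε ^ 2)⁻¹ • p.1)

lemma ae_mem_twoScaleMeasure [SFinite μ] (hQ : MeasurableSet Q) :
    ∀ᵐ p ∂twoScaleMeasure Q μ, p.1.1 ∈ Q := by
  have hprod : ∀ᵐ p ∂(volume.restrict Q).prod μ, p.1 ∈ Q :=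
    Measure.quasiMeasurePreserving_fst.ae (ae_restrict_mem hQ)
  exact Measure.quasiMeasurePreserving_fst.ae hprod

lemma ae_mem_Ioo_twoScaleMeasure [SFinite μ] :
    ∀ᵐ p ∂twoScaleMeasure Q μ, ∀ i, p.2 i ∈ Set.Ioo (0 : ℝ) 1 := by
  have hIoo : Set.pi Set.univ (fun _ : Fin N => Set.Ioo (0 : ℝ) 1) =ᵐ[volume] Ycube N :=
    Measure.univ_pi_Ioo_ae_eq_Icc (μ := fun _ : Fin N => (volume : Measure ℝ))
      (f := fun _ => 0) (g := fun _ => 1)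
  have hcube : ∀ᵐ y ∂volume.restrict (Ycube N), ∀ i, y i ∈ Set.Ioo (0 : ℝ) 1 := by
    rw [← Measure.restrict_congr_set hIoo]
    filter_upwards [ae_restrict_mem (MeasurableSet.univ_pi fun _ => measurableSet_Ioo)]
      with y hy i
    exact hy i (Set.mem_univ i)
  exact Measure.quasiMeasurePreserving_snd.ae hcube

lemma IsDynSys.measurable_apply_smul (hT : IsDynSys μ T) (c : ℝ) :
    Measurable fun p : (Fin N → ℝ) × Ω => T (c • p.1) p.2 :=
  hT.2.2.2.comp (by fun_prop : Measurable fun p : (Fin N → ℝ) × Ω => (c • p.1, p.2))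

lemma IsDynSys.measurable_twoScaleMap (hT : IsDynSys μ T) (ε : ℝ) :
    Measurable (twoScaleMap T ε) :=
  (measurable_fst.prodMk (hT.measurable_apply_smul _)).prodMk (by fun_prop)

lemma IsDynSys.measurePreserving_shear [SFinite μ] (hT : IsDynSys μ T) (c : ℝ) :
    MeasurePreserving (fun p : (Fin N → ℝ) × Ω => (p.1, T (c • p.1) p.2))
      ((volume.restrict Q).prod μ) ((volume.restrict Q).prod μ) :=
  (MeasurePreserving.id _).skew_product (hT.measurable_apply_smul c)
    (ae_of_all _ fun _ => (hT.2.2.1 _).map_eq)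

lemma IsAdmissible.integrable (ha : IsAdmissible a) (m : Measure (TwoScaleSpace N Ω))
    [IsFiniteMeasure m] : Integrable a m := by
  obtain ⟨C, hC⟩ := ha.bounded
  exact Integrable.of_bound ha.measurable.aestronglyMeasurable C (ae_of_all _ hC)

lemma IsAdmissible.integrable_comp_mul (ha : IsAdmissible a) {Z : Type*} [MeasurableSpace Z]
    {ν : Measure Z} {S : Z → TwoScaleSpace N Ω} (hS : Measurable S) {u : Z → ℝ}
    (hu : Integrable u ν) : Integrable (fun z => a (S z) * u z) ν :=
  _root_.integrable_comp_mul ha.measurable ha.bounded hS hu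

lemma IsAdmissible.integral_comp_twoScaleMap [IsFiniteMeasure μ]
    [IsFiniteMeasure ((volume : Measure (Fin N → ℝ)).restrict Q)] (ha : IsAdmissible a)
    (hT : IsDynSys μ T) (ε : ℝ) :
    ∫ p, a (twoScaleMap T ε p) ∂(volume.restrict Q).prod μ =
      ∫ ω, (∫ x in Q, a ((x, ω), (ε ^ 2)⁻¹ • x)) ∂μ := by
  obtain ⟨C, hC⟩ := ha.bounded
  have hm : Measurable fun p : (Fin N → ℝ) × Ω => a (p, (ε ^ 2)⁻¹ • p.1) :=
    ha.measurable.comp (by fun_prop)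
  rw [← integral_prod_symm (fun p : (Fin N → ℝ) × Ω => a (p, (ε ^ 2)⁻¹ • p.1))
    (Integrable.of_bound hm.aestronglyMeasurable C (ae_of_all _ fun p => hC _))]
  have hshear := hT.measurePreserving_shear (Q := Q) ε⁻¹
  conv_rhs => rw [← hshear.map_eq]
  exact (integral_map hshear.measurable.aemeasurable hm.aestronglyMeasurable).symm

lemma IsAdmissible.integral_twoScaleMeasure [IsFiniteMeasure μ]
    [IsFiniteMeasure ((volume : Measure (Fin N → ℝ)).restrict Q)] (ha : IsAdmissible a) :
    ∫ p, a p ∂twoScaleMeasure Q μ = ∫ ω, (∫ x in Q, ∫ y in Ycube N, a ((x, ω), y)) ∂μ := by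
  have hi := ha.integrable (twoScaleMeasure Q μ)
  rw [integral_prod _ hi, integral_prod_symm _ hi.integral_prod_left]

lemma IsAdmissible.tendsto_setIntegral (ha : IsAdmissible a) (hQ : Bornology.IsBounded Q)
    (haQ : ∀ x ∉ Q, ∀ ω y, a ((x, ω), y) = 0) (hε : ∀ k, ε k ∈ Set.Ioc (0 : ℝ) 1)
    (hε0 : Tendsto ε atTop (𝓝 0)) (ω : Ω) :
    Tendsto (fun k => ∫ x in Q, a ((x, ω), (ε k ^ 2)⁻¹ • x)) atTop
      (𝓝 (∫ x in Q, ∫ y in Ycube N, a ((x, ω), y))) := by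
  obtain ⟨C, hC⟩ := ha.bounded
  obtain ⟨r, hr⟩ := hQ.exists_norm_le
  have hosc (k) : ∫ x in Q, a ((x, ω), (ε k ^ 2)⁻¹ • x) = ∫ x, a ((x, ω), (ε k ^ 2)⁻¹ • x) :=
    setIntegral_eq_integral_of_forall_compl_eq_zero fun x hx => haQ x hx _ _
  have hmean : ∫ x in Q, ∫ y in Ycube N, a ((x, ω), y) = ∫ x, ∫ y in Ycube N, a ((x, ω), y) :=
    setIntegral_eq_integral_of_forall_compl_eq_zero fun x hx => by simp [haQ x hx]
  simp_rw [hosc, hmean]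
  exact tendsto_integral_oscillating (H := fun x y => a ((x, ω), y)) (ha.continuous ω)
    (fun x => ha.periodic x ω) (fun x y => hC _)
    (fun x hx y => haQ x (fun h => (hr x h).not_gt hx) ω y)
    (fun k => ⟨pow_pos (hε k).1 _, pow_le_one₀ (hε k).1.le (hε k).2⟩) (by simpa using hε0.pow 2)

lemma IsAdmissible.tendsto_integral_comp_twoScaleMap [IsFiniteMeasure μ] (ha : IsAdmissible a)
    (hT : IsDynSys μ T) (hQ : Bornology.IsBounded Q) (haQ : ∀ x ∉ Q, ∀ ω y, a ((x, ω), y) = 0)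
    (hε : ∀ k, ε k ∈ Set.Ioc (0 : ℝ) 1) (hε0 : Tendsto ε atTop (𝓝 0)) :
    Tendsto (fun k => ∫ p, a (twoScaleMap T (ε k) p) ∂(volume.restrict Q).prod μ) atTop
      (𝓝 (∫ p, a p ∂twoScaleMeasure Q μ)) := by
  have hQv : volume Q < ⊤ := hQ.measure_lt_top
  have : IsFiniteMeasure ((volume : Measure (Fin N → ℝ)).restrict Q) := ⟨by simpa using hQv⟩
  obtain ⟨C, hC⟩ := ha.bounded
  simp_rw [ha.integral_comp_twoScaleMap hT, ha.integral_twoScaleMeasure]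
  refine tendsto_integral_of_dominated_convergence (fun _ => C * volume.real Q) (fun k => ?_)
    (integrable_const _)
    (fun k => ae_of_all _ fun ω => norm_setIntegral_le_of_norm_le_const hQv fun x _ => hC _)
    (ae_of_all _ fun ω => ha.tendsto_setIntegral hQ haQ hε hε0 ω)
  have hm : Measurable fun p : Ω × (Fin N → ℝ) => a ((p.2, p.1), (ε k ^ 2)⁻¹ • p.2) :=
    ha.measurable.comp (by fun_prop)
  exact (hm.stronglyMeasurable.integral_prod_right' (ν := volume.restrict Q)).aestronglyMeasurable

lemma WeakStoch2Scale.tendsto_integral_mul [SFinite μ] (hT : IsDynSys μ T)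
    {u : ℕ → (Fin N → ℝ) × Ω → ℝ} {W : TwoScaleSpace N Ω → ℝ}
    (hu : ∀ k, Integrable (u k) ((volume.restrict Q).prod μ))
    (hW : Integrable W (twoScaleMeasure Q μ))
    (hconv : WeakStoch2Scale μ T Q ε (fun k x ω => u k (x, ω)) (fun x ω y => W ((x, ω), y)))
    {κ : (Fin N → ℝ) → ℝ} (hκ : ContDiff ℝ (⊤ : ℕ∞) κ) (hκc : HasCompactSupport κ)
    (hκQ : tsupport κ ⊆ Q) {θ : TwoScaleSpace N Ω → ℝ} (hθ : θ ∈ testAlgebra N Ω) :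
    Tendsto (fun k => ∫ p, κ p.1 * θ (twoScaleMap T (ε k) p) * u k p ∂(volume.restrict Q).prod μ)
      atTop (𝓝 (∫ p, κ p.1.1 * θ p * W p ∂twoScaleMeasure Q μ)) := by
  have hadm {a} (ha : a ∈ testAlgebra N Ω) :
      IsAdmissible fun p : TwoScaleSpace N Ω => κ p.1.1 * a p :=
    mul_mem (isAdmissible_slow hκ.continuous (hκ.continuous.bounded_above_of_compact_support hκc))
      (testAlgebra_le_admissibleAlgebra ha)
  have hiu {a} (ha : a ∈ testAlgebra N Ω) (k : ℕ) :
      Integrable (fun p => κ p.1 * a (twoScaleMap T (ε k) p) * u k p)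
        ((volume.restrict Q).prod μ) :=
    (hadm ha).integrable_comp_mul (hT.measurable_twoScaleMap (ε k)) (hu k)
  have hiW {a} (ha : a ∈ testAlgebra N Ω) :
      Integrable (fun p => κ p.1.1 * a p * W p) (twoScaleMeasure Q μ) :=
    (hadm ha).integrable_comp_mul measurable_id hW
  induction hθ using testAlgebra_induction with
  | elementary a ha =>
    have hmem : a ∈ testAlgebra N Ω := Algebra.subset_adjoin ha
    obtain ⟨φ, ψ, g, hφ, -, hψ, hψb, hg, hgp, rfl⟩ := ha
    convert hconv (fun x => κ x * φ x) (hκ.mul hφ) hκc.mul_right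
      (tsupport_mul_subset_left.trans hκQ) ψ hψ hψb g hg hgp using 2 with k
    · rw [integral_prod _ (hiu hmem k)]
      simp only [twoScaleMap]
      congr! 4
      ring
    · rw [integral_prod _ (hiW hmem), integral_prod _ (hiW hmem).integral_prod_left]
      congr! 6
      ring
  | zero => simp
  | add a b ha hb iha ihb =>
    simp only [Pi.add_apply, mul_add, add_mul]
    simpa only [integral_add (hiu ha _) (hiu hb _), integral_add (hiW ha) (hiW hb)]
      using iha.add ihb
  | smul c a ha iha =>
    simp only [Pi.smul_apply, smul_eq_mul, mul_left_comm _ c, mul_assoc c, integral_const_mul]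
    exact iha.const_mul c

lemma exists_smooth_cutoff {E : Type*} [NormedAddCommGroup E] [NormedSpace ℝ E]
    [FiniteDimensional ℝ E] {K U : Set E} (hK : IsCompact K) (hU : IsOpen U) (hKU : K ⊆ U) :
    ∃ κ : E → ℝ, ContDiff ℝ (⊤ : ℕ∞) κ ∧ HasCompactSupport κ ∧ tsupport κ ⊆ U ∧
      (∀ x, κ x ∈ Set.Icc (0 : ℝ) 1) ∧ ∀ x ∈ K, κ x = 1 := by
  obtain ⟨L, hL, hKL, hLU⟩ := exists_compact_between hK hU hKU
  obtain ⟨κ, hκ, hκ01, hκsupp, hκK⟩ := exists_contMDiff_support_eq_eq_one_iff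
    (modelWithCornersSelf ℝ E) (n := (⊤ : ℕ∞)) isOpen_interior hK.isClosed hKL
  have htsupp : tsupport κ ⊆ L :=
    closure_minimal (hκsupp.trans_subset interior_subset) hL.isClosed
  exact ⟨κ, hκ.contDiff, hL.of_isClosed_subset (isClosed_tsupport κ) htsupp, htsupp.trans hLU,
    fun x => hκ01 ⟨x, rfl⟩, fun x hx => (hκK x).1 hx⟩

lemma exists_smooth_cutoffs_tendsto {E : Type*} [NormedAddCommGroup E] [NormedSpace ℝ E]
    [FiniteDimensional ℝ E] {U : Set E} (hU : IsOpen U) (hUb : Bornology.IsBounded U) :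
    ∃ κ : ℕ → E → ℝ, (∀ n, ContDiff ℝ (⊤ : ℕ∞) (κ n)) ∧ (∀ n, HasCompactSupport (κ n)) ∧
      (∀ n, tsupport (κ n) ⊆ U) ∧ (∀ n x, κ n x ∈ Set.Icc (0 : ℝ) 1) ∧
      ∀ x ∈ U, Tendsto (fun n => κ n x) atTop (𝓝 1) := by
  have : ProperSpace E := FiniteDimensional.proper ℝ E
  obtain ⟨F, hFclosed, hFU, hFunion, hFmono⟩ := hU.exists_iUnion_isClosed
  choose κ hκ hκc hκU hκ01 hκ1 using fun n => exists_smooth_cutoff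
    (Metric.isCompact_of_isClosed_isBounded (hFclosed n) (hUb.subset (hFU n))) hU (hFU n)
  refine ⟨κ, hκ, hκc, hκU, hκ01, fun x hx => ?_⟩
  obtain ⟨n₀, hn₀⟩ := Set.mem_iUnion.1 (hFunion ▸ hx)
  exact tendsto_const_nhds.congr' ((eventually_ge_atTop n₀).mono fun n hn =>
    (hκ1 n x (hFmono hn hn₀)).symm)

end Oscillation

section LocalLowerBound

variable {X Z ι : Type*} [MeasurableSpace X] [MeasurableSpace Z] {m : Measure X} {ν : Measure Z}
  {𝒜 : Subalgebra ℝ (X → ℝ)} {S : ι → Z → X} {G : ι → Z → ℝ} {l : Filter ι}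

/-- `q` is an asymptotic lower bound for the sequence `G`, transported by the maps `S`, that
persists under localization by any nonnegative member of the algebra `𝒜`:
`∫ θ q ≤ liminf ∫ θ(S k) G k`. The integrals are compared up to `η`, which avoids real-valued
`liminf`s. -/
structure IsLocalLowerBound (𝒜 : Subalgebra ℝ (X → ℝ)) (m : Measure X) (ν : Measure Z)
    (S : ι → Z → X) (G : ι → Z → ℝ) (l : Filter ι) (q : X → ℝ) : Prop where
  measurable : Measurable q
  integrable : Integrable q m
  eventually_le : ∀ θ ∈ 𝒜, (∀ p, 0 ≤ θ p) → ∀ η > 0, ∀ᶠ k in l,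
    ∫ p, θ p * q p ∂m - η ≤ ∫ z, θ (S k z) * G k z ∂ν

lemma tendsto_integral_switch {θ q₁ q₂ : X → ℝ} {χ : ℕ → X → ℝ} (hθ : Measurable θ)
    (hθb : ∃ C, ∀ p, |θ p| ≤ C) (hq₁ : Integrable q₁ m) (hq₂ : Integrable q₂ m)
    (hχ : ∀ n, Measurable (χ n)) (hχ01 : ∀ n p, χ n p ∈ Set.Icc (0 : ℝ) 1)
    (hχlim : ∀ᵐ p ∂m, Tendsto (χ · p) atTop (𝓝 ({p | q₂ p < q₁ p}.indicator 1 p))) :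
    Tendsto (fun n => ∫ p, θ p * (χ n p * q₁ p + (1 - χ n p) * q₂ p) ∂m) atTop
      (𝓝 (∫ p, θ p * max (q₁ p) (q₂ p) ∂m)) := by
  obtain ⟨C, hC⟩ := hθb
  refine tendsto_integral_of_dominated_convergence (fun p => C * (|q₁ p| + |q₂ p|)) (fun n => ?_)
    ((hq₁.abs.add hq₂.abs).const_mul C) (fun n => ae_of_all _ fun p => ?_) ?_
  · have := hq₁.aestronglyMeasurable
    have := hq₂.aestronglyMeasurable
    have := (hχ n).aestronglyMeasurable (μ := m)
    exact hθ.aestronglyMeasurable.mul (by fun_prop)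
  · obtain ⟨h0, h1⟩ := hχ01 n p
    rw [norm_mul]
    refine mul_le_mul (hC p) ((abs_add_le _ _).trans (add_le_add ?_ ?_)) (norm_nonneg _)
      ((abs_nonneg _).trans (hC p))
    · rw [abs_mul, abs_of_nonneg h0]
      exact mul_le_of_le_one_left (abs_nonneg _) h1
    · rw [abs_mul, abs_of_nonneg (sub_nonneg.2 h1)]
      exact mul_le_of_le_one_left (abs_nonneg _) (by linarith)
  · filter_upwards [hχlim] with p hp
    convert ((hp.mul_const (q₁ p)).add ((hp.const_sub 1).mul_const (q₂ p))).const_mul (θ p) using 2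
    by_cases hlt : q₂ p < q₁ p
    · simp [hlt, max_eq_left hlt.le]
    · simp [hlt, max_eq_right (not_lt.1 hlt)]

lemma integral_mul_switch (h𝒜 : ∀ θ ∈ 𝒜, Measurable θ) (h𝒜b : ∀ θ ∈ 𝒜, ∃ C, ∀ p, |θ p| ≤ C)
    {θ χ : X → ℝ} (hθ : θ ∈ 𝒜) (hχ : χ ∈ 𝒜) {R : Z → X} (hR : Measurable R) {g₁ g₂ : Z → ℝ}
    (hg₁ : Integrable g₁ ν) (hg₂ : Integrable g₂ ν) :
    ∫ z, θ (R z) * (χ (R z) * g₁ z + (1 - χ (R z)) * g₂ z) ∂ν =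
      ∫ z, (θ * χ) (R z) * g₁ z ∂ν + ∫ z, (θ * (1 - χ)) (R z) * g₂ z ∂ν := by
  have hmem₁ : θ * χ ∈ 𝒜 := mul_mem hθ hχ
  have hmem₂ : θ * (1 - χ) ∈ 𝒜 := mul_mem hθ (sub_mem (one_mem _) hχ)
  rw [← integral_add (integrable_comp_mul (h𝒜 _ hmem₁) (h𝒜b _ hmem₁) hR hg₁)
    (integrable_comp_mul (h𝒜 _ hmem₂) (h𝒜b _ hmem₂) hR hg₂)]
  refine integral_congr_ae (ae_of_all _ fun z => ?_)
  simp only [Pi.mul_apply, Pi.sub_apply, Pi.one_apply]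
  ring

lemma tendsto_integral_partialSups {q : ℕ → X → ℝ} {g : X → ℝ}
    (hq : ∀ n, Integrable (q n) m) (hg : Integrable g m)
    (hlub : ∀ p, IsLUB (Set.range (q · p)) (g p)) :
    Tendsto (fun n => ∫ p, partialSups q n p ∂m) atTop (𝓝 (∫ p, g p ∂m)) := by
  have hle (n p) : partialSups q n p ≤ g p := by
    rw [Pi.partialSups_apply]
    exact partialSups_le _ _ _ fun j _ => (hlub p).1 ⟨j, rfl⟩
  have hge {j n} (hjn : j ≤ n) (p) : q j p ≤ partialSups q n p := le_partialSups_of_le q hjn p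
  have hinteg (n) : Integrable (partialSups q n) m := by
    induction n with
    | zero => simpa using hq 0
    | succ n ih => rw [partialSups_add_one]; exact ih.sup (hq (n + 1))
  refine tendsto_integral_of_dominated_convergence (fun p => |q 0 p| + |g p|)
    (fun n => (hinteg n).aestronglyMeasurable) ((hq 0).abs.add hg.abs)
    (fun n => ae_of_all _ fun p => abs_le.2 ⟨?_, ?_⟩) (ae_of_all _ fun p => ?_)
  · linarith [hge (Nat.zero_le n) p, neg_abs_le (q 0 p), abs_nonneg (g p)]
  · linarith [hle n p, le_abs_self (g p), abs_nonneg (q 0 p)]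
  · refine tendsto_order.2
      ⟨fun a ha => ?_, fun a ha => Eventually.of_forall fun n => (hle n p).trans_lt ha⟩
    obtain ⟨_, ⟨j, rfl⟩, hj, -⟩ := (hlub p).exists_between ha
    filter_upwards [eventually_ge_atTop j] with n hn using hj.trans_le (hge hn p)

variable [IsFiniteMeasure m]

-- Localize `q₁` to `{q₂ < q₁}` and `q₂` to the complement by members of `𝒜`.
lemma IsLocalLowerBound.sup {q₁ q₂ : X → ℝ}
    (h𝒜 : ∀ θ ∈ 𝒜, Measurable θ) (h𝒜b : ∀ θ ∈ 𝒜, ∃ C, ∀ p, |θ p| ≤ C)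
    (happrox : ∀ A, MeasurableSet A → IsApproximable 𝒜 m A)
    (hS : ∀ k, Measurable (S k)) (hG : ∀ k, Integrable (G k) ν)
    (h₁ : IsLocalLowerBound 𝒜 m ν S G l q₁) (h₂ : IsLocalLowerBound 𝒜 m ν S G l q₂) :
    IsLocalLowerBound 𝒜 m ν S G l (q₁ ⊔ q₂) := by
  refine ⟨h₁.measurable.sup h₂.measurable, h₁.integrable.sup h₂.integrable,
    fun θ hθ hθ0 η hη => ?_⟩
  obtain ⟨χ, hχ, hχ01, hχlim⟩ :=
    (happrox _ (measurableSet_lt h₂.measurable h₁.measurable)).exists_tendsto_ae h𝒜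
  have hlim := tendsto_integral_switch (h𝒜 θ hθ) (h𝒜b θ hθ) h₁.integrable h₂.integrable
    (fun n => h𝒜 _ (hχ n)) hχ01 hχlim
  have hη3 : 0 < η / 3 := by positivity
  obtain ⟨n, hn⟩ := (hlim.eventually_const_lt (sub_lt_self _ hη3)).exists
  have hlimit := integral_mul_switch h𝒜 h𝒜b hθ (hχ n) measurable_id h₁.integrable h₂.integrable
  have hlocal₁ := h₁.eventually_le (θ * χ n) (mul_mem hθ (hχ n))
    (fun p => mul_nonneg (hθ0 p) (hχ01 n p).1) _ hη3
  have hlocal₂ := h₂.eventually_le (θ * (1 - χ n)) (mul_mem hθ (sub_mem (one_mem _) (hχ n)))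
    (fun p => mul_nonneg (hθ0 p) (sub_nonneg.2 (hχ01 n p).2)) _ hη3
  filter_upwards [hlocal₁, hlocal₂] with k hk₁ hk₂
  have hseq := integral_mul_switch h𝒜 h𝒜b hθ (hχ n) (hS k) (hG k) (hG k)
  simp only [← add_mul, add_sub_cancel, one_mul, id_eq] at hseq hlimit
  simp only [Pi.sup_apply]
  linarith

lemma IsLocalLowerBound.partialSups {q : ℕ → X → ℝ}
    (h𝒜 : ∀ θ ∈ 𝒜, Measurable θ) (h𝒜b : ∀ θ ∈ 𝒜, ∃ C, ∀ p, |θ p| ≤ C)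
    (happrox : ∀ A, MeasurableSet A → IsApproximable 𝒜 m A)
    (hS : ∀ k, Measurable (S k)) (hG : ∀ k, Integrable (G k) ν)
    (hq : ∀ n, IsLocalLowerBound 𝒜 m ν S G l (q n)) (n : ℕ) :
    IsLocalLowerBound 𝒜 m ν S G l (partialSups q n) := by
  induction n with
  | zero => simpa using hq 0
  | succ n ih =>
    rw [partialSups_add_one]
    exact ih.sup h𝒜 h𝒜b happrox hS hG (hq (n + 1))

lemma IsLocalLowerBound.eventually_integral_le_of_isLUB {q : ℕ → X → ℝ} {g : X → ℝ}
    (h𝒜 : ∀ θ ∈ 𝒜, Measurable θ) (h𝒜b : ∀ θ ∈ 𝒜, ∃ C, ∀ p, |θ p| ≤ C)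
    (happrox : ∀ A, MeasurableSet A → IsApproximable 𝒜 m A)
    (hS : ∀ k, Measurable (S k)) (hG : ∀ k, Integrable (G k) ν)
    (hq : ∀ n, IsLocalLowerBound 𝒜 m ν S G l (q n)) (hg : Integrable g m)
    (hlub : ∀ p, IsLUB (Set.range (q · p)) (g p)) {η : ℝ} (hη : 0 < η) :
    ∀ᶠ k in l, ∫ p, g p ∂m - η ≤ ∫ z, G k z ∂ν := by
  have hlim := tendsto_integral_partialSups (fun n => (hq n).integrable) hg hlub
  have hη2 : 0 < η / 2 := by positivity
  obtain ⟨n, hn⟩ := (hlim.eventually_const_lt (sub_lt_self _ hη2)).exists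
  have hsup := IsLocalLowerBound.partialSups h𝒜 h𝒜b happrox hS hG hq n
  filter_upwards [hsup.eventually_le 1 (one_mem _) (fun _ => zero_le_one) _ hη2] with k hk
  simp only [Pi.one_apply, one_mul] at hk
  linarith

end LocalLowerBound

section Legendre

variable {n : Type*} [Fintype n]

/-- The Legendre transform `ξ ↦ sup_l (ξ · l - h l)`. It takes the junk value `0` where the supremum
is infinite, which does not happen for superlinear `h`. -/
def legendre (h : (n → ℝ) → ℝ) (ξ : n → ℝ) : ℝ := ⨆ l, (ξ ⬝ᵥ l - h l)

/-- The functions `h i` grow faster than any linear function, uniformly in `i`. -/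
def IsSuperlinear {ι : Type*} (h : ι → (n → ℝ) → ℝ) : Prop :=
  ∀ M : ℝ, ∃ C : ℝ, ∀ i l, M * ‖l‖ - C ≤ h i l

lemma dotProduct_le_card_mul_norm_mul_norm (ξ l : n → ℝ) :
    ξ ⬝ᵥ l ≤ Fintype.card n * ‖ξ‖ * ‖l‖ := by
  have hterm (i : n) : ξ i * l i ≤ ‖ξ‖ * ‖l‖ :=
    (le_abs_self _).trans ((abs_mul _ _).trans_le
      (mul_le_mul (norm_le_pi_norm ξ i) (norm_le_pi_norm l i) (abs_nonneg _) (norm_nonneg _)))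
  simpa [dotProduct, mul_assoc] using Finset.sum_le_card_nsmul Finset.univ _ _ fun i _ => hterm i

section Superlinear

variable {ι : Type*} {h : ι → (n → ℝ) → ℝ}

lemma IsSuperlinear.exists_dotProduct_sub_le (hh : IsSuperlinear h) (ξ : n → ℝ) :
    ∃ B, ∀ i l, ξ ⬝ᵥ l - h i l ≤ B := by
  obtain ⟨C, hC⟩ := hh (Fintype.card n * ‖ξ‖)
  exact ⟨C, fun i l => by linarith [hC i l, dotProduct_le_card_mul_norm_mul_norm ξ l]⟩

lemma IsSuperlinear.bddAbove (hh : IsSuperlinear h) (i : ι) (ξ : n → ℝ) :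
    BddAbove (Set.range fun l => ξ ⬝ᵥ l - h i l) := by
  obtain ⟨B, hB⟩ := hh.exists_dotProduct_sub_le ξ
  exact ⟨B, by rintro _ ⟨l, rfl⟩; exact hB i l⟩

lemma IsSuperlinear.dotProduct_sub_le_legendre (hh : IsSuperlinear h) (i : ι) (ξ l : n → ℝ) :
    ξ ⬝ᵥ l - h i l ≤ legendre (h i) ξ :=
  le_ciSup (hh.bddAbove i ξ) l

lemma IsSuperlinear.convexOn_legendre (hh : IsSuperlinear h) (i : ι) :
    ConvexOn ℝ Set.univ (legendre (h i)) := by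
  refine ⟨convex_univ, fun ξ _ ζ _ a b ha hb hab => ciSup_le fun l => ?_⟩
  have hξ := mul_le_mul_of_nonneg_left (hh.dotProduct_sub_le_legendre i ξ l) ha
  have hζ := mul_le_mul_of_nonneg_left (hh.dotProduct_sub_le_legendre i ζ l) hb
  have hsplit : (a • ξ + b • ζ) ⬝ᵥ l - h i l =
      a * (ξ ⬝ᵥ l - h i l) + b * (ζ ⬝ᵥ l - h i l) := by
    rw [add_dotProduct, smul_dotProduct, smul_dotProduct, smul_eq_mul, smul_eq_mul]
    linear_combination h i l * hab
  simp only [smul_eq_mul]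
  linarith

lemma IsSuperlinear.continuous_legendre (hh : IsSuperlinear h) (i : ι) :
    Continuous (legendre (h i)) :=
  continuousOn_univ.1 ((hh.convexOn_legendre i).continuousOn isOpen_univ)

lemma IsSuperlinear.exists_abs_legendre_le (hh : IsSuperlinear h) (hh0 : ∃ c, ∀ i, h i 0 ≤ c)
    (ξ : n → ℝ) : ∃ B, ∀ i, |legendre (h i) ξ| ≤ B := by
  obtain ⟨B, hB⟩ := hh.exists_dotProduct_sub_le ξ
  obtain ⟨c, hc⟩ := hh0
  refine ⟨max B c, fun i => abs_le.2 ⟨?_, (ciSup_le (hB i)).trans (le_max_left _ _)⟩⟩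
  have hzero := hh.dotProduct_sub_le_legendre i ξ 0
  rw [dotProduct_zero] at hzero
  linarith [hc i, le_max_right B c]

-- Outside a large ball `ξ · l - h i l` is smaller than its value at `l = 0`.
lemma IsSuperlinear.exists_legendre_eq_sSup_closedBall (hh : IsSuperlinear h)
    (hh0 : ∃ c, ∀ i, h i 0 ≤ c) (ξ : n → ℝ) :
    ∃ R, ∀ i, legendre (h i) ξ =
      sSup ((fun l => ξ ⬝ᵥ l - h i l) '' Metric.closedBall 0 R) := by
  obtain ⟨c, hc⟩ := hh0
  obtain ⟨C, hC⟩ := hh (Fintype.card n * ‖ξ‖ + 1)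
  have hzero : (0 : n → ℝ) ∈ Metric.closedBall 0 (max 0 (C + c)) := by simp
  refine ⟨max 0 (C + c), fun i => le_antisymm (ciSup_le fun l => ?_)
    (csSup_le ⟨_, 0, hzero, rfl⟩ ?_)⟩
  · have hbdd : BddAbove ((fun l => ξ ⬝ᵥ l - h i l) '' Metric.closedBall 0 (max 0 (C + c))) :=
      (hh.bddAbove i ξ).mono (Set.image_subset_range _ _)
    by_cases hl : l ∈ Metric.closedBall 0 (max 0 (C + c))
    · exact le_csSup hbdd ⟨l, hl, rfl⟩
    · have hnorm : C + c < ‖l‖ := by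
        rw [mem_closedBall_zero_iff, not_le] at hl
        exact (le_max_right _ _).trans_lt hl
      refine le_trans ?_ (le_csSup hbdd ⟨0, hzero, rfl⟩)
      beta_reduce
      rw [dotProduct_zero]
      linarith [hC i l, hc i, dotProduct_le_card_mul_norm_mul_norm ξ l]
  · rintro _ ⟨l, -, rfl⟩
    exact hh.dotProduct_sub_le_legendre i ξ l

lemma IsSuperlinear.continuous_legendre_param [TopologicalSpace ι] (hh : IsSuperlinear h)
    (hh0 : ∃ c, ∀ i, h i 0 ≤ c) (hcont : Continuous fun q : ι × (n → ℝ) => h q.1 q.2)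
    (ξ : n → ℝ) : Continuous fun i => legendre (h i) ξ := by
  obtain ⟨R, hR⟩ := hh.exists_legendre_eq_sSup_closedBall hh0 ξ
  simp only [hR]
  refine (isCompact_closedBall 0 R).continuous_sSup (f := fun i l => ξ ⬝ᵥ l - h i l) ?_
  exact Continuous.sub (by fun_prop) hcont

lemma measurable_legendre_param [MeasurableSpace ι] (hmeas : ∀ l, Measurable fun i => h i l)
    (hconv : ∀ i, ConvexOn ℝ Set.univ (h i)) (ξ : n → ℝ) :
    Measurable fun i => legendre (h i) ξ := by
  have hdense (i : ι) : legendre (h i) ξ =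
      ⨆ l : Set.range (TopologicalSpace.denseSeq (n → ℝ)), (ξ ⬝ᵥ (l : n → ℝ) - h i l) := by
    have hcont : Continuous (h i) := continuousOn_univ.1 ((hconv i).continuousOn isOpen_univ)
    exact ((TopologicalSpace.denseRange_denseSeq (n → ℝ)).ciSup'
      (f := fun l => ξ ⬝ᵥ l - h i l) (by fun_prop)).symm
  simp only [hdense]
  have : Countable (Set.range (TopologicalSpace.denseSeq (n → ℝ))) :=
    (Set.countable_range _).to_subtype
  exact Measurable.iSup fun l => measurable_const.sub (hmeas l)

end Superlinear

lemma exists_dotProduct_eq_of_clm (L : (n → ℝ) →L[ℝ] ℝ) : ∃ ξ : n → ℝ, ∀ l, L l = ξ ⬝ᵥ l := by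
  classical
  refine ⟨fun i => L (Pi.single i 1), fun l => ?_⟩
  conv_lhs => rw [pi_eq_sum_univ' l]
  simp [dotProduct, mul_comm]

-- Fenchel–Moreau: Hahn–Banach supplies the slope `ξ`, and continuity of the Legendre transform
-- lets `ξ` be moved to the dense set.
lemma IsSuperlinear.isLUB_dotProduct_sub_legendre {ι κ : Type*} {h : ι → (n → ℝ) → ℝ}
    (hh : IsSuperlinear h) {i : ι} (hconv : ConvexOn ℝ Set.univ (h i)) {d : κ → n → ℝ}
    (hd : DenseRange d) (l : n → ℝ) :
    IsLUB (Set.range fun j => d j ⬝ᵥ l - legendre (h i) (d j)) (h i l) := by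
  refine ⟨?_, fun b hb => le_of_forall_lt fun a ha => ?_⟩
  · rintro _ ⟨j, rfl⟩
    linarith [hh.dotProduct_sub_le_legendre i (d j) l]
  obtain ⟨a', haa', ha'⟩ := exists_between ha
  have hcont : Continuous (h i) := continuousOn_univ.1 (hconv.continuousOn isOpen_univ)
  obtain ⟨L, c, hLle, hLeq⟩ := ConvexOn.exists_affine_le_of_lt (𝕜 := ℝ) (Set.mem_univ l) ha'
    isClosed_univ (hcont.lowerSemicontinuous.lowerSemicontinuousOn _) hconv
  obtain ⟨ξ, hξ⟩ := exists_dotProduct_eq_of_clm L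
  have hlegendre : legendre (h i) ξ ≤ -c := ciSup_le fun l' => by
    have hle : L l' + c ≤ h i l' := hLle ⟨l', Set.mem_univ l'⟩
    linarith [hξ l']
  have hval : L l + c = a' := hLeq
  have hopen : IsOpen {ζ | a < ζ ⬝ᵥ l - legendre (h i) ζ} := by
    have := hh.continuous_legendre i
    exact isOpen_lt continuous_const (by fun_prop)
  obtain ⟨j, hj⟩ := hd.exists_mem_open hopen
    ⟨ξ, show a < ξ ⬝ᵥ l - legendre (h i) ξ by linarith [hξ l]⟩
  exact (show a < d j ⬝ᵥ l - legendre (h i) (d j) from hj).trans_le (hb ⟨j, rfl⟩)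

end Legendre

section ConvexIntegrand

variable {N : ℕ} {Ω : Type*} [MeasurableSpace Ω]
  {F : TwoScaleSpace N Ω → (Fin N → ℝ) → ℝ}

/-- A nonnegative integrand `F(x, ω, y, l)` that is convex and superlinear in `l`, periodic in `y`,
measurable in `ω` and continuous in `(x, y, l)`, with no exceptional null sets. -/
structure IsConvexIntegrand (F : TwoScaleSpace N Ω → (Fin N → ℝ) → ℝ) : Prop where
  measurable : ∀ x y l, Measurable fun ω => F ((x, ω), y) l
  continuous : ∀ ω, Continuous fun q : ((Fin N → ℝ) × (Fin N → ℝ)) × (Fin N → ℝ) =>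
    F ((q.1.1, ω), q.1.2) q.2
  periodic : ∀ x ω l, ZPeriodic fun y => F ((x, ω), y) l
  convexOn : ∀ p, ConvexOn ℝ Set.univ (F p)
  nonneg : ∀ p l, 0 ≤ F p l
  zero_le : ∃ c, ∀ p, F p 0 ≤ c
  superlinear : IsSuperlinear F

lemma IsConvexIntegrand.measurable_uncurry (hF : IsConvexIntegrand F) :
    Measurable fun q : TwoScaleSpace N Ω × (Fin N → ℝ) => F q.1 q.2 :=
  (measurable_uncurry_of_continuous_of_measurable
    (u := fun (q : ((Fin N → ℝ) × (Fin N → ℝ)) × (Fin N → ℝ)) ω => F ((q.1.1, ω), q.1.2) q.2)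
    hF.continuous fun _ => hF.measurable _ _ _).comp
    (by fun_prop : Measurable fun q : TwoScaleSpace N Ω × (Fin N → ℝ) =>
      (((q.1.1.1, q.1.2), q.2), q.1.1.2))

lemma IsConvexIntegrand.isAdmissible_legendre (hF : IsConvexIntegrand F) (ξ : Fin N → ℝ) :
    IsAdmissible fun p => legendre (F p) ξ where
  measurable := measurable_legendre_param
    (fun l => hF.measurable_uncurry.comp (measurable_id.prodMk measurable_const)) hF.convexOn ξ
  continuous ω := IsSuperlinear.continuous_legendre_param
    (h := fun q : (Fin N → ℝ) × (Fin N → ℝ) => F ((q.1, ω), q.2))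
    (fun M => (hF.superlinear M).imp fun _ hC q => hC _)
    (hF.zero_le.imp fun _ hc q => hc _) (hF.continuous ω) ξ
  periodic x ω y k := by
    simp only [legendre]
    exact iSup_congr fun l => congrArg _ (hF.periodic x ω l y k)
  bounded := hF.superlinear.exists_abs_legendre_le hF.zero_le ξ

end ConvexIntegrand

section AffineMinorants

variable {N : ℕ} {Ω : Type*} [MeasurableSpace Ω] {μ : Measure Ω} {Q : Set (Fin N → ℝ)}
  {T : (Fin N → ℝ) → Ω → Ω} {ε : ℕ → ℝ} {h w : TwoScaleSpace N Ω → ℝ} {ξ : Fin N → ℝ}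
  {D : ℕ → (Fin N → ℝ) × Ω → Fin N → ℝ} {V : TwoScaleSpace N Ω → Fin N → ℝ}

lemma integrable_dotProduct {Z n : Type*} [MeasurableSpace Z] [Fintype n] {ν : Measure Z}
    {W : Z → n → ℝ} (hW : ∀ j, Integrable (W · j) ν) (ξ : n → ℝ) :
    Integrable (fun z => ξ ⬝ᵥ W z) ν :=
  integrable_finsetSum Finset.univ fun j _ => (hW j).const_mul (ξ j)

lemma IsAdmissible.integrable_dotProduct_sub {Z : Type*} [MeasurableSpace Z] {ν : Measure Z}
    [IsFiniteMeasure ν] {S : Z → TwoScaleSpace N Ω} (hS : Measurable S) {W : Z → Fin N → ℝ}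
    (hW : ∀ j, Integrable (W · j) ν) (hh : IsAdmissible h) (ξ : Fin N → ℝ) :
    Integrable (fun z => ξ ⬝ᵥ W z - h (S z)) ν := by
  have hhS : Integrable (fun z => h (S z)) ν := by
    simpa using hh.integrable_comp_mul hS (integrable_const (1 : ℝ))
  exact (integrable_dotProduct hW ξ).sub hhS

lemma IsAdmissible.integral_mul_dotProduct_sub {Z : Type*} [MeasurableSpace Z] {ν : Measure Z}
    [IsFiniteMeasure ν] {S : Z → TwoScaleSpace N Ω} (hS : Measurable S) {W : Z → Fin N → ℝ}
    (hW : ∀ j, Integrable (W · j) ν) (hw : IsAdmissible w) (hh : IsAdmissible h)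
    (ξ : Fin N → ℝ) :
    ∫ z, w (S z) * (ξ ⬝ᵥ W z - h (S z)) ∂ν =
      (∑ j, ξ j * ∫ z, w (S z) * W z j ∂ν) - ∫ z, (w * h) (S z) ∂ν := by
  have hlin (j : Fin N) : Integrable (fun z => ξ j * (w (S z) * W z j)) ν :=
    (hw.integrable_comp_mul hS (hW j)).const_mul _
  have hprod : Integrable (fun z => (w * h) (S z)) ν := by
    have hwh : IsAdmissible (w * h) := (admissibleAlgebra N Ω).mul_mem hw hh
    simpa using hwh.integrable_comp_mul hS (integrable_const (1 : ℝ))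
  simp_rw [← integral_const_mul]
  rw [← integral_finsetSum _ fun j _ => hlin j,
    ← integral_sub (integrable_finsetSum _ fun j _ => hlin j) hprod]
  refine integral_congr_ae (ae_of_all _ fun z => ?_)
  simp only [dotProduct, mul_sub, Finset.mul_sum, Pi.mul_apply, mul_left_comm]

lemma tendsto_integral_cutoff_mul [SFinite μ] (hQ : MeasurableSet Q) {κ : ℕ → (Fin N → ℝ) → ℝ}
    (hκ : ∀ n, Measurable (κ n)) (hκ01 : ∀ n x, κ n x ∈ Set.Icc (0 : ℝ) 1)
    (hκlim : ∀ x ∈ Q, Tendsto (κ · x) atTop (𝓝 1)) {g : TwoScaleSpace N Ω → ℝ}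
    (hg : Integrable g (twoScaleMeasure Q μ)) :
    Tendsto (fun n => ∫ p, κ n p.1.1 * g p ∂twoScaleMeasure Q μ) atTop
      (𝓝 (∫ p, g p ∂twoScaleMeasure Q μ)) := by
  refine tendsto_integral_of_dominated_convergence (fun p => ‖g p‖) (fun n => ?_) hg.norm
    (fun n => ae_of_all _ fun p => ?_) ?_
  · exact ((hκ n).comp (by fun_prop)).aestronglyMeasurable.mul hg.aestronglyMeasurable
  · rw [norm_mul, Real.norm_of_nonneg (hκ01 n _).1]
    exact mul_le_of_le_one_left (norm_nonneg _) (hκ01 n _).2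
  · filter_upwards [ae_mem_twoScaleMeasure hQ] with p hp
    simpa using (hκlim _ hp).mul_const (g p)

lemma integral_cutoff_mul_le_integral_mul {Z : Type*} [MeasurableSpace Z] {ν : Measure Z}
    {κ θ q g : Z → ℝ} (hκ : ∀ z, κ z ∈ Set.Icc (0 : ℝ) 1) (hθ : ∀ z, 0 ≤ θ z)
    (hqg : ∀ z, q z ≤ g z) (hg : ∀ z, 0 ≤ g z) (hκθq : Integrable (fun z => κ z * θ z * q z) ν)
    (hθg : Integrable (fun z => θ z * g z) ν) :
    ∫ z, κ z * θ z * q z ∂ν ≤ ∫ z, θ z * g z ∂ν := by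
  refine integral_mono hκθq hθg fun z => ?_
  calc κ z * θ z * q z
    _ ≤ κ z * θ z * g z := mul_le_mul_of_nonneg_left (hqg z) (mul_nonneg (hκ z).1 (hθ z))
    _ ≤ θ z * g z := mul_le_mul_of_nonneg_right (mul_le_of_le_one_left (hθ z) (hκ z).2) (hg z)

variable [IsFiniteMeasure μ]

lemma tendsto_integral_localized_affine (hT : IsDynSys μ T) (hQ : Bornology.IsBounded Q)
    (hε : ∀ k, ε k ∈ Set.Ioc (0 : ℝ) 1) (hε0 : Tendsto ε atTop (𝓝 0))
    (hD : ∀ k j, Integrable (D k · j) ((volume.restrict Q).prod μ))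
    (hV : ∀ j, Integrable (V · j) (twoScaleMeasure Q μ))
    (hconv : ∀ j, WeakStoch2Scale μ T Q ε (fun k x ω => D k (x, ω) j)
      (fun x ω y => V ((x, ω), y) j))
    (hh : IsAdmissible h) {κ : (Fin N → ℝ) → ℝ} (hκ : ContDiff ℝ (⊤ : ℕ∞) κ)
    (hκc : HasCompactSupport κ) (hκQ : tsupport κ ⊆ Q) {θ : TwoScaleSpace N Ω → ℝ}
    (hθ : θ ∈ testAlgebra N Ω) :
    Tendsto (fun k => ∫ p, κ p.1 * θ (twoScaleMap T (ε k) p) *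
        (ξ ⬝ᵥ D k p - h (twoScaleMap T (ε k) p)) ∂(volume.restrict Q).prod μ) atTop
      (𝓝 (∫ p, κ p.1.1 * θ p * (ξ ⬝ᵥ V p - h p) ∂twoScaleMeasure Q μ)) := by
  have : IsFiniteMeasure ((volume : Measure (Fin N → ℝ)).restrict Q) :=
    ⟨by simpa using hQ.measure_lt_top⟩
  have hw : IsAdmissible fun p : TwoScaleSpace N Ω => κ p.1.1 * θ p :=
    mul_mem (isAdmissible_slow hκ.continuous (hκ.continuous.bounded_above_of_compact_support hκc))
      (testAlgebra_le_admissibleAlgebra hθ)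
  have hκ0 (x) (hx : x ∉ Q) : κ x = 0 := image_eq_zero_of_notMem_tsupport fun hx' => hx (hκQ hx')
  have hseq (k) := hw.integral_mul_dotProduct_sub (hT.measurable_twoScaleMap (ε k)) (hD k) hh ξ
  have hlim := hw.integral_mul_dotProduct_sub measurable_id hV hh ξ
  simp only [twoScaleMap, id_eq] at hseq hlim ⊢
  rw [hlim]
  simp only [hseq]
  refine (tendsto_finsetSum _ fun j _ => ((hconv j).tendsto_integral_mul hT (fun k => hD k j) (hV j)
    hκ hκc hκQ hθ).const_mul _).sub ?_
  exact IsAdmissible.tendsto_integral_comp_twoScaleMap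
    ((admissibleAlgebra N Ω).mul_mem hw hh) hT hQ (fun x hx ω y => by simp [hκ0 x hx]) hε hε0

lemma isLocalLowerBound_affine (hT : IsDynSys μ T) (hQo : IsOpen Q) (hQb : Bornology.IsBounded Q)
    (hε : ∀ k, ε k ∈ Set.Ioc (0 : ℝ) 1) (hε0 : Tendsto ε atTop (𝓝 0))
    {G : ℕ → (Fin N → ℝ) × Ω → ℝ} (hG : ∀ k, Integrable (G k) ((volume.restrict Q).prod μ))
    (hG0 : ∀ k p, 0 ≤ G k p) (hVm : Measurable V)
    (hD : ∀ k j, Integrable (D k · j) ((volume.restrict Q).prod μ))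
    (hV : ∀ j, Integrable (V · j) (twoScaleMeasure Q μ))
    (hconv : ∀ j, WeakStoch2Scale μ T Q ε (fun k x ω => D k (x, ω) j)
      (fun x ω y => V ((x, ω), y) j))
    (hh : IsAdmissible h) (hle : ∀ k p, ξ ⬝ᵥ D k p - h (twoScaleMap T (ε k) p) ≤ G k p) :
    IsLocalLowerBound (testAlgebra N Ω) (twoScaleMeasure Q μ) ((volume.restrict Q).prod μ)
      (fun k => twoScaleMap T (ε k)) G atTop (fun p => ξ ⬝ᵥ V p - h p) := by
  have : IsFiniteMeasure ((volume : Measure (Fin N → ℝ)).restrict Q) :=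
    ⟨by simpa using hQb.measure_lt_top⟩
  have hafi : Integrable (fun p => ξ ⬝ᵥ V p - h p) (twoScaleMeasure Q μ) :=
    hh.integrable_dotProduct_sub measurable_id hV ξ
  refine ⟨((by fun_prop : Continuous (ξ ⬝ᵥ ·)).measurable.comp hVm).sub hh.measurable, hafi,
    fun θ hθ hθ0 η hη => ?_⟩
  have hθa := isAdmissible_of_mem_testAlgebra hθ
  have hη2 : 0 < η / 2 := by positivity
  obtain ⟨κ, hκ, hκc, hκQ, hκ01, hκlim⟩ := exists_smooth_cutoffs_tendsto hQo hQb
  have hcutoff := tendsto_integral_cutoff_mul hQo.measurableSet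
    (fun n => (hκ n).continuous.measurable) hκ01 hκlim (hθa.integrable_comp_mul measurable_id hafi)
  obtain ⟨n, hn⟩ := (hcutoff.eventually_const_lt (sub_lt_self _ hη2)).exists
  have hlim := tendsto_integral_localized_affine (ξ := ξ) hT hQb hε hε0 hD hV hconv hh (hκ n)
    (hκc n) (hκQ n) hθ
  filter_upwards [hlim.eventually_const_lt (sub_lt_self _ hη2)] with k hk
  have hS := hT.measurable_twoScaleMap (ε k)
  have hwa : IsAdmissible fun p : TwoScaleSpace N Ω => κ n p.1.1 * θ p :=
    mul_mem (isAdmissible_slow (hκ n).continuous ⟨1, fun x => abs_le.2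
      ⟨by linarith [(hκ01 n x).1], (hκ01 n x).2⟩⟩) (testAlgebra_le_admissibleAlgebra hθ)
  have hmono := integral_cutoff_mul_le_integral_mul (fun p => hκ01 n p.1)
    (fun p => hθ0 (twoScaleMap T (ε k) p)) (hle k) (hG0 k)
    (hwa.integrable_comp_mul hS (hh.integrable_dotProduct_sub hS (hD k) ξ))
    (hθa.integrable_comp_mul hS (hG k))
  simp only [id_eq, mul_assoc] at hn hk hmono
  linarith

theorem IsConvexIntegrand.eventually_integral_le {F : TwoScaleSpace N Ω → (Fin N → ℝ) → ℝ}
    (hF : IsConvexIntegrand F) (hT : IsDynSys μ T) (hQo : IsOpen Q) (hQb : Bornology.IsBounded Q)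
    (hε : ∀ k, ε k ∈ Set.Ioc (0 : ℝ) 1) (hε0 : Tendsto ε atTop (𝓝 0)) (hVm : Measurable V)
    (hD : ∀ k j, Integrable (D k · j) ((volume.restrict Q).prod μ))
    (hV : ∀ j, Integrable (V · j) (twoScaleMeasure Q μ))
    (hconv : ∀ j, WeakStoch2Scale μ T Q ε (fun k x ω => D k (x, ω) j)
      (fun x ω y => V ((x, ω), y) j))
    (hFD : ∀ k, Integrable (fun p => F (twoScaleMap T (ε k) p) (D k p))
      ((volume.restrict Q).prod μ))
    (hFV : Integrable (fun p => F p (V p)) (twoScaleMeasure Q μ)) {η : ℝ} (hη : 0 < η) :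
    ∀ᶠ k in atTop, ∫ p, F p (V p) ∂twoScaleMeasure Q μ - η ≤
      ∫ p, F (twoScaleMap T (ε k) p) (D k p) ∂(volume.restrict Q).prod μ := by
  have : IsFiniteMeasure ((volume : Measure (Fin N → ℝ)).restrict Q) :=
    ⟨by simpa using hQb.measure_lt_top⟩
  have hdense := TopologicalSpace.denseRange_denseSeq (Fin N → ℝ)
  refine IsLocalLowerBound.eventually_integral_le_of_isLUB
    (fun θ hθ => (isAdmissible_of_mem_testAlgebra hθ).measurable)
    (fun θ hθ => (isAdmissible_of_mem_testAlgebra hθ).bounded)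
    (fun A hA => isApproximable_testAlgebra ae_mem_Ioo_twoScaleMeasure hA)
    (fun k => hT.measurable_twoScaleMap (ε k)) hFD (fun n => ?_) hFV
    (fun p => hF.superlinear.isLUB_dotProduct_sub_legendre (hF.convexOn p) hdense (V p)) hη
  exact isLocalLowerBound_affine hT hQo hQb hε hε0 hFD (fun k p => hF.nonneg _ _) hVm hD hV hconv
    (hF.isAdmissible_legendre _) fun k p => by
      linarith [hF.superlinear.dotProduct_sub_le_legendre (twoScaleMap T (ε k) p)
        (TopologicalSpace.denseSeq (Fin N → ℝ) n) (D k p)]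

end AffineMinorants

section Young

variable {N : ℕ} {Φ : ℝ → ℝ}

lemma enorm2_nonneg (v : Fin N → ℝ) : 0 ≤ enorm2 v := Real.sqrt_nonneg _

lemma continuous_enorm2 : Continuous (enorm2 : (Fin N → ℝ) → ℝ) := by
  unfold enorm2
  fun_prop

lemma norm_le_enorm2 (v : Fin N → ℝ) : ‖v‖ ≤ enorm2 v :=
  (pi_norm_le_iff_of_nonneg (enorm2_nonneg v)).2 fun i =>
    Real.abs_le_sqrt <| Finset.single_le_sum (f := fun i => v i ^ 2) (fun _ _ => sq_nonneg _)
      (Finset.mem_univ i)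

lemma IsYoung.nonneg (hΦ : IsYoung Φ) {t : ℝ} (ht : 0 ≤ t) : 0 ≤ Φ t := hΦ.2.2.2.2.1 t ht

lemma IsYoung.monotoneOn (hΦ : IsYoung Φ) : MonotoneOn Φ (Set.Ici 0) := by
  intro s hs t ht hst
  rcases (Set.mem_Ici.1 ht).eq_or_lt with rfl | ht_pos
  · rw [le_antisymm hst hs]
  have hratio : s / t ≤ 1 := (div_le_one ht_pos).2 hst
  have hconv := hΦ.2.1.2 ht Set.self_mem_Ici (div_nonneg hs ht) (sub_nonneg.2 hratio) (by ring)
  simp only [smul_eq_mul, hΦ.2.2.1, mul_zero, add_zero, div_mul_cancel₀ _ ht_pos.ne'] at hconv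
  exact hconv.trans (mul_le_of_le_one_left (hΦ.nonneg ht) hratio)

lemma IsYoung.continuous_comp_enorm2 (hΦ : IsYoung Φ) :
    Continuous fun v : Fin N → ℝ => Φ (enorm2 v) :=
  hΦ.1.comp_continuous continuous_enorm2 enorm2_nonneg

lemma IsYoung.exists_mul_sub_le (hΦ : IsYoung Φ) {M : ℝ} (hM : 0 ≤ M) :
    ∃ C : ℝ, ∀ t, 0 ≤ t → M * t - C ≤ Φ t := by
  obtain ⟨t₁, hlarge⟩ := ((hΦ.2.2.2.2.2.2.eventually_ge_atTop M).and
    (eventually_gt_atTop 0)).exists_forall_of_atTop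
  have ht₁ : 0 < t₁ := (hlarge t₁ le_rfl).2
  refine ⟨M * t₁, fun t ht => ?_⟩
  rcases le_total t₁ t with h | h
  · have hMt := (le_div_iff₀ (ht₁.trans_le h)).1 (hlarge t h).1
    linarith [mul_nonneg hM ht₁.le]
  · linarith [mul_le_mul_of_nonneg_left h hM, hΦ.nonneg ht]

lemma IsYoung.isSuperlinear (hΦ : IsYoung Φ) {ι : Type*} {h : ι → (Fin N → ℝ) → ℝ} {c : ℝ}
    (hc : 0 < c) (hh : ∀ i l, c * Φ (enorm2 l) ≤ h i l) : IsSuperlinear h := by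
  intro M
  obtain ⟨C, hC⟩ := hΦ.exists_mul_sub_le (M := |M| / c) (by positivity)
  refine ⟨c * C, fun i l => ?_⟩
  calc M * ‖l‖ - c * C ≤ |M| * enorm2 l - c * C := by
        gcongr
        exacts [le_abs_self M, norm_le_enorm2 l]
    _ = c * (|M| / c * enorm2 l - C) := by field_simp
    _ ≤ c * Φ (enorm2 l) := by gcongr; exact hC _ (enorm2_nonneg l)
    _ ≤ h i l := hh i l

lemma Delta2.exists_two_mul_le (hΦ2 : Delta2 Φ) (hΦ : IsYoung Φ) :
    ∃ α β : ℝ, 0 ≤ α ∧ 0 ≤ β ∧ ∀ t, 0 ≤ t → Φ (2 * t) ≤ α * Φ t + β := by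
  obtain ⟨α, hα, t₀, ht₀, hdouble⟩ := hΦ2
  have ht₀' : 0 ≤ 2 * t₀ := by positivity
  refine ⟨α, Φ (2 * t₀), hα.le, hΦ.nonneg ht₀', fun t ht => ?_⟩
  rcases le_total t₀ t with h | h
  · linarith [hdouble t h, hΦ.nonneg ht₀']
  · have hmono := hΦ.monotoneOn (by positivity : 0 ≤ 2 * t) ht₀' (by linarith)
    linarith [mul_nonneg hα.le (hΦ.nonneg ht)]

lemma Delta2.exists_two_pow_mul_le (hΦ2 : Delta2 Φ) (hΦ : IsYoung Φ) (n : ℕ) :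
    ∃ A B : ℝ, 0 ≤ A ∧ 0 ≤ B ∧ ∀ t, 0 ≤ t → Φ (2 ^ n * t) ≤ A * Φ t + B := by
  obtain ⟨α, β, hα, hβ, hdouble⟩ := hΦ2.exists_two_mul_le hΦ
  induction n with
  | zero => exact ⟨1, 0, zero_le_one, le_rfl, fun t _ => by simp⟩
  | succ n ih =>
    obtain ⟨A, B, hA, hB, hAB⟩ := ih
    refine ⟨α * A, α * B + β, by positivity, by positivity, fun t ht => ?_⟩
    calc Φ (2 ^ (n + 1) * t) = Φ (2 * (2 ^ n * t)) := by ring_nf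
      _ ≤ α * Φ (2 ^ n * t) + β := hdouble _ (by positivity)
      _ ≤ α * (A * Φ t + B) + β := by gcongr; exact hAB t ht
      _ = α * A * Φ t + (α * B + β) := by ring

end Young

section Orlicz

variable {N : ℕ} {Φ : ℝ → ℝ} {X : Type*} [MeasurableSpace X] {ν : Measure X} {L : ℝ≥0∞}
  {W : X → Fin N → ℝ}

lemma exists_lintegral_div_le_one_of_luxNorm_lt {u : X → ℝ} {R : ℝ}
    (hu : luxNorm Φ ν u < ENNReal.ofReal R) :
    ∃ δ, 0 < δ ∧ δ < R ∧ ∫⁻ x, ENNReal.ofReal (Φ (|u x| / δ)) ∂ν ≤ 1 := by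
  obtain ⟨_, ⟨δ, hδ, rfl, hle⟩, hlt⟩ := sInf_lt_iff.1 hu
  exact ⟨δ, hδ, (ENNReal.ofReal_lt_ofReal_iff_of_nonneg hδ.le).1 hlt, hle⟩

-- For `δ ≤ 2 ^ n`, iterating the `Δ₂`-condition `n` times bounds `Φ |u|` by `Φ (|u| / δ)`.
lemma Delta2.exists_lintegral_le (hΦ2 : Delta2 Φ) (hΦ : IsYoung Φ) (ν : Measure X)
    [IsFiniteMeasure ν] (hL : L < ⊤) :
    ∃ C : ℝ≥0∞, C < ⊤ ∧ ∀ u : X → ℝ, luxNorm Φ ν u ≤ L →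
      ∫⁻ x, ENNReal.ofReal (Φ |u x|) ∂ν ≤ C := by
  obtain ⟨n, hn⟩ : ∃ n : ℕ, L.toReal < 2 ^ n := pow_unbounded_of_one_lt _ one_lt_two
  obtain ⟨A, B, hA, hB, hAB⟩ := hΦ2.exists_two_pow_mul_le hΦ n
  refine ⟨ENNReal.ofReal A + ENNReal.ofReal B * ν Set.univ, by finiteness, fun u hu => ?_⟩
  obtain ⟨δ, hδ, hδn, hle⟩ := exists_lintegral_div_le_one_of_luxNorm_lt
    (hu.trans_lt ((ENNReal.lt_ofReal_iff_toReal_lt hL.ne).2 hn))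
  have hpt (x : X) : ENNReal.ofReal (Φ |u x|) ≤
      ENNReal.ofReal A * ENNReal.ofReal (Φ (|u x| / δ)) + ENNReal.ofReal B := by
    have hscale : |u x| ≤ 2 ^ n * (|u x| / δ) := by
      rw [mul_div_left_comm]
      exact le_mul_of_one_le_right (abs_nonneg _) ((one_le_div hδ).2 hδn.le)
    rw [← ENNReal.ofReal_mul hA,
      ← ENNReal.ofReal_add (mul_nonneg hA (hΦ.nonneg (by positivity))) hB]
    exact ENNReal.ofReal_le_ofReal <| (hΦ.monotoneOn (Set.mem_Ici.2 (abs_nonneg _))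
      (Set.mem_Ici.2 (by positivity)) hscale).trans (hAB _ (by positivity))
  calc ∫⁻ x, ENNReal.ofReal (Φ |u x|) ∂ν
      ≤ ∫⁻ x, (ENNReal.ofReal A * ENNReal.ofReal (Φ (|u x| / δ)) + ENNReal.ofReal B) ∂ν :=
        lintegral_mono hpt
    _ = ENNReal.ofReal A * ∫⁻ x, ENNReal.ofReal (Φ (|u x| / δ)) ∂ν +
          ENNReal.ofReal B * ν Set.univ := by
        rw [lintegral_add_right _ measurable_const,
          lintegral_const_mul' _ _ ENNReal.ofReal_ne_top, lintegral_const]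
    _ ≤ ENNReal.ofReal A + ENNReal.ofReal B * ν Set.univ := by
        gcongr
        exact mul_le_of_le_one_right' hle

lemma Delta2.exists_lintegral_comp_enorm2_le (hΦ2 : Delta2 Φ) (hΦ : IsYoung Φ) (ν : Measure X)
    [IsFiniteMeasure ν] (hL : L < ⊤) :
    ∃ C : ℝ≥0∞, C < ⊤ ∧ ∀ W : X → Fin N → ℝ, luxNorm Φ ν (fun x => enorm2 (W x)) ≤ L →
      ∫⁻ x, ENNReal.ofReal (Φ (enorm2 (W x))) ∂ν ≤ C := by
  obtain ⟨C, hC, hle⟩ := hΦ2.exists_lintegral_le hΦ ν hL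
  exact ⟨C, hC, fun W hW => by
    simpa only [abs_of_nonneg (enorm2_nonneg _)] using hle _ hW⟩

lemma Delta2.integrable_comp_enorm2 [IsFiniteMeasure ν] (hΦ2 : Delta2 Φ) (hΦ : IsYoung Φ)
    (hW : Measurable W) (hWL : luxNorm Φ ν (fun x => enorm2 (W x)) < ⊤) :
    Integrable (fun x => Φ (enorm2 (W x))) ν := by
  obtain ⟨C, hC, hle⟩ := hΦ2.exists_lintegral_comp_enorm2_le (N := N) hΦ ν hWL
  refine ⟨(hΦ.continuous_comp_enorm2.measurable.comp hW).aestronglyMeasurable, ?_⟩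
  rw [hasFiniteIntegral_iff_ofReal (ae_of_all _ fun x => hΦ.nonneg (enorm2_nonneg _))]
  exact (hle W le_rfl).trans_lt hC

lemma Delta2.exists_integral_comp_enorm2_le (hΦ2 : Delta2 Φ) (hΦ : IsYoung Φ) (ν : Measure X)
    [IsFiniteMeasure ν] (hL : L < ⊤) :
    ∃ C : ℝ, ∀ W : X → Fin N → ℝ, Measurable W → luxNorm Φ ν (fun x => enorm2 (W x)) ≤ L →
      ∫ x, Φ (enorm2 (W x)) ∂ν ≤ C := by
  obtain ⟨C, hC, hle⟩ := hΦ2.exists_lintegral_comp_enorm2_le (N := N) hΦ ν hL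
  refine ⟨C.toReal, fun W hW hWL => ?_⟩
  rw [integral_eq_lintegral_of_nonneg_ae (ae_of_all _ fun x => hΦ.nonneg (enorm2_nonneg _))
    (hΦ.continuous_comp_enorm2.measurable.comp hW).aestronglyMeasurable]
  exact ENNReal.toReal_mono hC.ne (hle W hWL)

lemma IsYoung.integrable_apply [IsFiniteMeasure ν] (hΦ : IsYoung Φ) (hW : Measurable W)
    (hΦW : Integrable (fun x => Φ (enorm2 (W x))) ν) (j : Fin N) : Integrable (W · j) ν := by
  obtain ⟨C, hC⟩ := hΦ.exists_mul_sub_le zero_le_one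
  refine (hΦW.add (integrable_const C)).mono' (by fun_prop) (ae_of_all _ fun x => ?_)
  simp only [Pi.add_apply]
  linarith [hC _ (enorm2_nonneg (W x)), (norm_le_pi_norm (W x) j).trans (norm_le_enorm2 (W x))]

end Orlicz

section Modification

lemma forall_of_ae_of_isClosed {X : Type*} [TopologicalSpace X] [MeasurableSpace X] {ν : Measure X}
    [ν.IsOpenPosMeasure] {P : X → Prop} (h : ∀ᵐ x ∂ν, P x) (hc : IsClosed {x | P x}) (x : X) :
    P x :=
  hc.closure_subset (Measure.dense_of_ae h x)

lemma exists_measurable_forall_of_ae {Ω : Type*} [MeasurableSpace Ω] {μ : Measure Ω} [NeZero μ]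
    {P : Ω → Prop} (h : ∀ᵐ ω ∂μ, P ω) :
    ∃ r : Ω → Ω, Measurable r ∧ (∀ ω, P (r ω)) ∧ ∀ᵐ ω ∂μ, r ω = ω := by
  classical
  obtain ⟨S, hS, hSm, hSP⟩ := h.exists_measurable_mem
  obtain ⟨ω₀, hω₀⟩ : S.Nonempty := nonempty_of_mem hS
  refine ⟨fun ω => if ω ∈ S then ω else ω₀, Measurable.ite hSm measurable_id measurable_const,
    fun ω => ?_, ?_⟩
  · dsimp only
    split_ifs with hω
    exacts [hSP ω hω, hSP ω₀ hω₀]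
  · filter_upwards [hS] with ω hω using if_pos hω

variable {N : ℕ} {Ω : Type*} [MeasurableSpace Ω] {μ : Measure Ω} {Φ : ℝ → ℝ}
  {f : (Fin N → ℝ) → Ω → (Fin N → ℝ) → (Fin N → ℝ) → ℝ} {c₁ c₂ : ℝ}

lemma ae_forall_convexOn [SFinite μ]
    (hcont : ∀ᵐ ω ∂μ, ∀ x l, Continuous fun y => f x ω y l)
    (hconv : ∀ᵐ p ∂(μ.prod (volume : Measure (Fin N → ℝ))), ∀ x,
      ConvexOn ℝ Set.univ (f x p.1 p.2)) :
    ∀ᵐ ω ∂μ, ∀ x y, ConvexOn ℝ Set.univ (f x ω y) := by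
  filter_upwards [hcont, Measure.ae_ae_of_ae_prod hconv] with ω hcω hω x
  exact forall_of_ae_of_isClosed (hω.mono fun y hy => hy x) 
    (isClosed_setOfPred_convexOn.preimage (continuous_pi (hcω x)))

lemma ae_forall_growth [SFinite μ]
    (hcont : ∀ᵐ ω ∂μ, ∀ x l, Continuous fun y => f x ω y l)
    (hgrowth : ∀ᵐ p ∂(μ.prod (volume : Measure (Fin N → ℝ))), ∀ x l,
      c₁ * Φ (enorm2 l) ≤ f x p.1 p.2 l ∧ f x p.1 p.2 l ≤ c₂ * (1 + Φ (enorm2 l))) :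
    ∀ᵐ ω ∂μ, ∀ x l y,
      c₁ * Φ (enorm2 l) ≤ f x ω y l ∧ f x ω y l ≤ c₂ * (1 + Φ (enorm2 l)) := by
  filter_upwards [hcont, Measure.ae_ae_of_ae_prod hgrowth] with ω hcω hω x l
  exact forall_of_ae_of_isClosed (hω.mono fun y hy => hy x l)
    ((isClosed_le continuous_const (hcω x l)).inter (isClosed_le (hcω x l) continuous_const))

lemma exists_isConvexIntegrand [SFinite μ] [NeZero μ] (hΦ : IsYoung Φ)
    (hmeas : ∀ x y l, Measurable fun ω => f x ω y l)
    (hcont : ∀ᵐ ω ∂μ, Continuous fun q : (Fin N → ℝ) × (Fin N → ℝ) × (Fin N → ℝ) =>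
      f q.1 ω q.2.1 q.2.2)
    (hconv : ∀ᵐ p ∂(μ.prod (volume : Measure (Fin N → ℝ))), ∀ x,
      ConvexOn ℝ Set.univ (f x p.1 p.2))
    (hc₁ : 0 < c₁)
    (hgrowth : ∀ᵐ p ∂(μ.prod (volume : Measure (Fin N → ℝ))), ∀ x l,
      c₁ * Φ (enorm2 l) ≤ f x p.1 p.2 l ∧ f x p.1 p.2 l ≤ c₂ * (1 + Φ (enorm2 l)))
    (hper : ∀ᵐ ω ∂μ, ∀ (x y l : Fin N → ℝ) (k : Fin N → ℤ),
      f x ω (y + fun i => (k i : ℝ)) l = f x ω y l) :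
    ∃ F : TwoScaleSpace N Ω → (Fin N → ℝ) → ℝ, IsConvexIntegrand F ∧
      (∀ p l, F p l ≤ c₂ * (1 + Φ (enorm2 l))) ∧
      ∀ᵐ ω ∂μ, ∀ x y l, F ((x, ω), y) l = f x ω y l := by
  have hcont_y : ∀ᵐ ω ∂μ, ∀ x l, Continuous fun y => f x ω y l :=
    hcont.mono fun ω hω x l => hω.comp (by fun_prop : Continuous fun y => (x, y, l))
  obtain ⟨r, hr, hgood, hrid⟩ := exists_measurable_forall_of_ae <| hcont.and <| hper.and <|
    (ae_forall_convexOn hcont_y hconv).and (ae_forall_growth hcont_y hgrowth)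
  choose hcont hper hconv hgrowth using hgood
  have hlow (p : TwoScaleSpace N Ω) (l : Fin N → ℝ) :
      c₁ * Φ (enorm2 l) ≤ f p.1.1 (r p.1.2) p.2 l := (hgrowth _ _ _ _).1
  refine ⟨fun p l => f p.1.1 (r p.1.2) p.2 l, ?_, fun p l => (hgrowth _ _ _ _).2, ?_⟩
  · exact
      { measurable := fun x y l => (hmeas x y l).comp hr
        continuous := fun ω => (hcont ω).comp
          (by fun_prop : Continuous fun q : ((Fin N → ℝ) × (Fin N → ℝ)) × (Fin N → ℝ) =>
            (q.1.1, q.1.2, q.2))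
        periodic := fun x ω l y k => hper ω x y l k
        convexOn := fun p => hconv _ _ _
        nonneg := fun p l =>
          (mul_nonneg hc₁.le (hΦ.nonneg (enorm2_nonneg l))).trans (hlow p l)
        zero_le := ⟨c₂ * (1 + Φ (enorm2 (0 : Fin N → ℝ))), fun p => (hgrowth _ _ _ _).2⟩
        superlinear := hΦ.isSuperlinear hc₁ hlow }
  · filter_upwards [hrid] with ω hω x y l
    simp only [hω]

end Modification

section Energy

variable {N : ℕ} {Ω : Type*} [MeasurableSpace Ω] {μ : Measure Ω} {Q : Set (Fin N → ℝ)}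
  {T : (Fin N → ℝ) → Ω → Ω} {Φ : ℝ → ℝ} {c : ℝ} {F : TwoScaleSpace N Ω → (Fin N → ℝ) → ℝ}

lemma ae_twoScaleMeasure_of_ae [SFinite μ] {P : Ω → Prop} (h : ∀ᵐ ω ∂μ, P ω) :
    ∀ᵐ p ∂twoScaleMeasure Q μ, P p.1.2 :=
  Measure.quasiMeasurePreserving_fst.ae (Measure.quasiMeasurePreserving_snd.ae h)

lemma IsDynSys.ae_apply_smul [SFinite μ] (hT : IsDynSys μ T) {P : Ω → Prop} (h : ∀ᵐ ω ∂μ, P ω)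
    (a : ℝ) : ∀ᵐ p ∂(volume.restrict Q).prod μ, P (T (a • p.1) p.2) :=
  (hT.measurePreserving_shear a).quasiMeasurePreserving.ae
    (Measure.quasiMeasurePreserving_snd.ae h)

section Composition

variable {Z : Type*} [MeasurableSpace Z] {ν : Measure Z} [IsFiniteMeasure ν]
  {S : Z → TwoScaleSpace N Ω} {W : Z → Fin N → ℝ}

lemma IsConvexIntegrand.integrable_comp (hF : IsConvexIntegrand F)
    (hup : ∀ p l, F p l ≤ c * (1 + Φ (enorm2 l))) (hS : Measurable S) (hW : Measurable W)
    (hΦW : Integrable (fun z => Φ (enorm2 (W z))) ν) :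
    Integrable (fun z => F (S z) (W z)) ν := by
  refine (((integrable_const (1 : ℝ)).add hΦW).const_mul c).mono'
    (hF.measurable_uncurry.comp (hS.prodMk hW)).aestronglyMeasurable (ae_of_all _ fun z => ?_)
  rw [Real.norm_of_nonneg (hF.nonneg _ _)]
  exact hup _ _

lemma IsConvexIntegrand.integral_comp_le (hF : IsConvexIntegrand F)
    (hup : ∀ p l, F p l ≤ c * (1 + Φ (enorm2 l))) (hS : Measurable S) (hW : Measurable W)
    (hΦW : Integrable (fun z => Φ (enorm2 (W z))) ν) :
    ∫ z, F (S z) (W z) ∂ν ≤ c * (ν.real Set.univ + ∫ z, Φ (enorm2 (W z)) ∂ν) := by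
  calc ∫ z, F (S z) (W z) ∂ν ≤ ∫ z, c * (1 + Φ (enorm2 (W z))) ∂ν :=
        integral_mono (hF.integrable_comp hup hS hW hΦW)
          (((integrable_const (1 : ℝ)).add hΦW).const_mul c) fun z => hup _ _
    _ = c * (ν.real Set.univ + ∫ z, Φ (enorm2 (W z)) ∂ν) := by
        rw [integral_const_mul, integral_add (integrable_const _) hΦW, integral_const, smul_eq_mul,
          mul_one]

end Composition

variable [IsFiniteMeasure μ] {ε : ℕ → ℝ} {D : ℕ → (Fin N → ℝ) × Ω → Fin N → ℝ}
  {V : TwoScaleSpace N Ω → Fin N → ℝ}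

theorem IsConvexIntegrand.integral_le_liminf (hF : IsConvexIntegrand F)
    (hΦ : IsYoung Φ) (hΦ2 : Delta2 Φ) (hc : 0 ≤ c)
    (hup : ∀ p l, F p l ≤ c * (1 + Φ (enorm2 l))) (hT : IsDynSys μ T)
    (hQo : IsOpen Q) (hQb : Bornology.IsBounded Q)
    (hε : ∀ k, ε k ∈ Set.Ioc (0 : ℝ) 1) (hε0 : Tendsto ε atTop (𝓝 0))
    (hDm : ∀ k, Measurable (D k))
    (hDbd : ⨆ k, luxNorm Φ ((volume.restrict Q).prod μ) (fun p => enorm2 (D k p)) < ⊤)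
    (hVm : Measurable V) (hVbd : luxNorm Φ (twoScaleMeasure Q μ) (fun p => enorm2 (V p)) < ⊤)
    (hconv : ∀ j, WeakStoch2Scale μ T Q ε (fun k x ω => D k (x, ω) j)
      (fun x ω y => V ((x, ω), y) j)) :
    ∫ p, F p (V p) ∂twoScaleMeasure Q μ ≤ atTop.liminf fun k =>
      ∫ p, F (twoScaleMap T (ε k) p) (D k p) ∂(volume.restrict Q).prod μ := by
  have : IsFiniteMeasure ((volume : Measure (Fin N → ℝ)).restrict Q) :=
    ⟨by simpa using hQb.measure_lt_top⟩
  have hDle (k : ℕ) := le_iSup (fun k => luxNorm Φ ((volume.restrict Q).prod μ)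
    fun p => enorm2 (D k p)) k
  have hΦD (k : ℕ) : Integrable (fun p => Φ (enorm2 (D k p))) ((volume.restrict Q).prod μ) :=
    hΦ2.integrable_comp_enorm2 hΦ (hDm k) ((hDle k).trans_lt hDbd)
  have hΦV : Integrable (fun p => Φ (enorm2 (V p))) (twoScaleMeasure Q μ) :=
    hΦ2.integrable_comp_enorm2 hΦ hVm hVbd
  have hSm (k : ℕ) := hT.measurable_twoScaleMap (ε k)
  have hbdd : IsBoundedUnder (· ≤ ·) atTop fun k =>
      ∫ p, F (twoScaleMap T (ε k) p) (D k p) ∂(volume.restrict Q).prod μ := by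
    obtain ⟨C, hC⟩ := hΦ2.exists_integral_comp_enorm2_le (N := N) hΦ
      ((volume.restrict Q).prod μ) hDbd
    refine isBoundedUnder_of ⟨c * (((volume.restrict Q).prod μ).real Set.univ + C), fun k =>
      (hF.integral_comp_le hup (hSm k) (hDm k) (hΦD k)).trans ?_⟩
    gcongr
    exact hC (D k) (hDm k) (hDle k)
  refine le_of_forall_pos_sub_le fun η hη => le_liminf_of_le hbdd.isCoboundedUnder_ge ?_
  exact hF.eventually_integral_le hT hQo hQb hε hε0 hVm
    (fun k => hΦ.integrable_apply (hDm k) (hΦD k)) (hΦ.integrable_apply hVm hΦV) hconv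
    (fun k => hF.integrable_comp hup (hSm k) (hDm k) (hΦD k))
    (hF.integrable_comp hup measurable_id hVm hΦV) hη

end Energy

theorem stmt10_general {N : ℕ} {Ω : Type*} [MeasurableSpace Ω] {μ : Measure Ω}
    [IsFiniteMeasure μ] [NeZero μ] {Φ : ℝ → ℝ} (hΦ : IsYoung Φ) (hΦ2 : Delta2 Φ)
    {T : (Fin N → ℝ) → Ω → Ω} (hT : IsDynSys μ T)
    {Q : Set (Fin N → ℝ)} (hQo : IsOpen Q) (hQb : Bornology.IsBounded Q)
    {f : (Fin N → ℝ) → Ω → (Fin N → ℝ) → (Fin N → ℝ) → ℝ}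
    (hfmeas : ∀ x y lam, Measurable fun ω => f x ω y lam)
    (hfcont : ∀ᵐ ω ∂μ, Continuous fun q : (Fin N → ℝ) × (Fin N → ℝ) × (Fin N → ℝ) =>
      f q.1 ω q.2.1 q.2.2)
    (hfconv : ∀ᵐ p ∂(μ.prod (volume : Measure (Fin N → ℝ))), ∀ x,
      ConvexOn ℝ Set.univ (f x p.1 p.2))
    {c₁ c₂ : ℝ} (hc₁ : 0 < c₁) (hc₂ : 0 ≤ c₂)
    (hfgrowth : ∀ᵐ p ∂(μ.prod (volume : Measure (Fin N → ℝ))), ∀ x lam,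
      c₁ * Φ (enorm2 lam) ≤ f x p.1 p.2 lam ∧ f x p.1 p.2 lam ≤ c₂ * (1 + Φ (enorm2 lam)))
    (hfper : ∀ᵐ ω ∂μ, ∀ (x y lam : Fin N → ℝ) (k : Fin N → ℤ),
      f x ω (y + fun i => (k i : ℝ)) lam = f x ω y lam)
    {ε : ℕ → ℝ} (hε : ∀ k, ε k ∈ Set.Ioc (0 : ℝ) 1) (hε0 : Tendsto ε atTop (𝓝 0))
    {D : ℕ → (Fin N → ℝ) → Ω → Fin N → ℝ}
    (hDmeas : ∀ k, Measurable fun p : (Fin N → ℝ) × Ω => D k p.1 p.2)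
    (hDbd : (⨆ k, luxNorm Φ ((volume.restrict Q).prod μ) fun p => enorm2 (D k p.1 p.2)) < ⊤)
    {V : (Fin N → ℝ) → Ω → (Fin N → ℝ) → Fin N → ℝ}
    (hVmeas : Measurable fun p : ((Fin N → ℝ) × Ω) × (Fin N → ℝ) => V p.1.1 p.1.2 p.2)
    (hVbd : luxNorm Φ (((volume.restrict Q).prod μ).prod (volume.restrict (Ycube N)))
      (fun p => enorm2 (V p.1.1 p.1.2 p.2)) < ⊤)
    (hconv : ∀ j, WeakStoch2Scale μ T Q ε (fun k x ω => D k x ω j) (fun x ω y => V x ω y j)) :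
    (∫ p, f p.1.1 p.1.2 p.2 (V p.1.1 p.1.2 p.2)
        ∂(((volume.restrict Q).prod μ).prod (volume.restrict (Ycube N)))) ≤
      atTop.liminf (fun k => ∫ p,
        f p.1 (T ((ε k)⁻¹ • p.1) p.2) (((ε k) ^ 2)⁻¹ • p.1) (D k p.1 p.2)
        ∂((volume.restrict Q).prod μ)) := by
  obtain ⟨F, hF, hup, hFf⟩ :=
    exists_isConvexIntegrand hΦ hfmeas hfcont hfconv hc₁ hfgrowth hfper
  have hlimit : ∫ p, f p.1.1 p.1.2 p.2 (V p.1.1 p.1.2 p.2) ∂twoScaleMeasure Q μ =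
      ∫ p, F p (V p.1.1 p.1.2 p.2) ∂twoScaleMeasure Q μ :=
    integral_congr_ae <| (ae_twoScaleMeasure_of_ae hFf).mono fun p hp => (hp _ _ _).symm
  have henergy (k : ℕ) : ∫ p, f p.1 (T ((ε k)⁻¹ • p.1) p.2) (((ε k) ^ 2)⁻¹ • p.1) (D k p.1 p.2)
        ∂((volume.restrict Q).prod μ) =
      ∫ p, F (twoScaleMap T (ε k) p) (D k p.1 p.2) ∂((volume.restrict Q).prod μ) :=
    integral_congr_ae <| (hT.ae_apply_smul hFf (ε k)⁻¹).mono fun p hp => (hp _ _ _).symm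
  simp only [hlimit, henergy]
  exact hF.integral_le_liminf hΦ hΦ2 hc₂ hup hT hQo hQb hε hε0 hDmeas hDbd hVmeas hVbd hconv

/-- lower semicontinuity of oscillating energies along gradients. -/
theorem stmt10 {N : ℕ} (hN : 1 ≤ N) {Ω : Type*} [MeasurableSpace Ω] (μ : Measure Ω)
    [IsProbabilityMeasure μ] (hgen : CountGenModNull μ)
    (Φ : ℝ → ℝ) (hΦ : IsYoung Φ) (hΦ2 : Delta2 Φ) (hΦ2' : DeltaPrime Φ)
    (hΦc2 : Delta2 (conjY Φ)) (hΦc2' : DeltaPrime (conjY Φ))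
    (T : (Fin N → ℝ) → Ω → Ω) (hT : IsDynSys μ T)
    (Q : Set (Fin N → ℝ)) (hQo : IsOpen Q) (hQb : Bornology.IsBounded Q)
    (f : (Fin N → ℝ) → Ω → (Fin N → ℝ) → (Fin N → ℝ) → ℝ)
    (hfmeas : ∀ x lam : Fin N → ℝ, Measurable fun p : Ω × (Fin N → ℝ) => f x p.1 p.2 lam)
    (hfcont : ∀ᵐ ω ∂μ, Continuous fun q : (Fin N → ℝ) × (Fin N → ℝ) × (Fin N → ℝ) =>
      f q.1 ω q.2.1 q.2.2)
    (hH1 : ∃ ϖ : ℝ → ℝ, Continuous ϖ ∧ ϖ 0 = 0 ∧ (∀ t, 0 ≤ ϖ t) ∧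
      ∃ a : (Fin N → ℝ) → ℝ, LocallyIntegrable a volume ∧
        ∀ᵐ p ∂(μ.prod (volume : Measure (Fin N → ℝ))), ∀ x x' lam : Fin N → ℝ,
          |f x p.1 p.2 lam - f x' p.1 p.2 lam| ≤ ϖ (enorm2 (x - x')) * (a p.2 + f x p.1 p.2 lam))
    (hH2 : ∀ᵐ p ∂(μ.prod (volume : Measure (Fin N → ℝ))), ∀ x : Fin N → ℝ,
      StrictConvexOn ℝ Set.univ (f x p.1 p.2))
    (c₁ c₂ : ℝ) (hc₁ : 0 < c₁) (hc₂ : 0 < c₂)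
    (hH3 : ∀ᵐ p ∂(μ.prod (volume : Measure (Fin N → ℝ))), ∀ x lam : Fin N → ℝ,
      c₁ * Φ (enorm2 lam) ≤ f x p.1 p.2 lam ∧ f x p.1 p.2 lam ≤ c₂ * (1 + Φ (enorm2 lam)))
    (hH4 : ∀ᵐ ω ∂μ, ∀ (x y lam : Fin N → ℝ) (k : Fin N → ℤ),
      f x ω (y + fun i => (k i : ℝ)) lam = f x ω y lam)
    (ε : ℕ → ℝ) (hε : ∀ k, ε k ∈ Set.Ioc (0 : ℝ) 1) (hε0 : Tendsto ε atTop (nhds 0))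
    (u : ℕ → (Fin N → ℝ) → Ω → ℝ) (Du : ℕ → (Fin N → ℝ) → Ω → Fin N → ℝ)
    (humeas : ∀ k, Measurable fun p : (Fin N → ℝ) × Ω => u k p.1 p.2)
    (hDumeas : ∀ k, Measurable fun p : (Fin N → ℝ) × Ω => Du k p.1 p.2)
    (hgrad : ∀ (k : ℕ) (i : Fin N) (φ : (Fin N → ℝ) → ℝ),
      ContDiff ℝ (⊤ : ℕ∞) φ → HasCompactSupport φ → tsupport φ ⊆ Q →
      ∀ ψ : Ω → ℝ, Measurable ψ → (∃ C : ℝ, ∀ ω, |ψ ω| ≤ C) →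
        (∫ p, u k p.1 p.2 * fderiv ℝ φ p.1 (Pi.single i 1) * ψ p.2
            ∂((volume.restrict Q).prod μ)) =
          -(∫ p, Du k p.1 p.2 i * φ p.1 * ψ p.2 ∂((volume.restrict Q).prod μ)))
    (hDubd : (⨆ k, luxNorm Φ ((volume.restrict Q).prod μ)
      fun p => enorm2 (Du k p.1 p.2)) < ⊤)
    (V : (Fin N → ℝ) → Ω → (Fin N → ℝ) → Fin N → ℝ)
    (hVmeas : Measurable fun p : ((Fin N → ℝ) × Ω) × (Fin N → ℝ) => V p.1.1 p.1.2 p.2)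
    (hVper : ∀ (x : Fin N → ℝ) (ω : Ω) (y : Fin N → ℝ) (k : Fin N → ℤ),
      V x ω (y + fun i => (k i : ℝ)) = V x ω y)
    (hVbd : luxNorm Φ (((volume.restrict Q).prod μ).prod (volume.restrict (Ycube N)))
      (fun p => enorm2 (V p.1.1 p.1.2 p.2)) < ⊤)
    (hconv : ∀ j : Fin N, WeakStoch2Scale μ T Q ε
      (fun k x ω => Du k x ω j) (fun x ω y => V x ω y j)) :
    (∫ p, f p.1.1 p.1.2 p.2 (V p.1.1 p.1.2 p.2)
        ∂(((volume.restrict Q).prod μ).prod (volume.restrict (Ycube N)))) ≤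
      atTop.liminf (fun k => ∫ p,
        f p.1 (T ((ε k)⁻¹ • p.1) p.2) (((ε k) ^ 2)⁻¹ • p.1) (Du k p.1 p.2)
        ∂((volume.restrict Q).prod μ)) := by
  exact stmt10_general (f := f) hΦ hΦ2 hT hQo hQb
    (fun x y lam => (hfmeas x lam).comp measurable_prodMk_right) hfcont
    (hH2.mono fun p hp x => (hp x).convexOn) hc₁ hc₂.le hH3 hH4 hε hε0 hDumeas hDubd hVmeas hVbd
    hconv
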